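/- Suppose g(r) = o(r^{-c}) as r → ∞ for some c > 3d. Then almost surely, liminf_{n→∞} (α n d_n^d)/(log n) ≥ (c − 3d)/(c − d). -/

import Mathlib

open MeasureTheory ProbabilityTheory Filter Set

noncomputable section

namespace RCM

/-- The toroidal metric on the unit cube. -/
def torusDist {d : ℕ} (x y : EuclideanSpace ℝ (Fin d)) : ℝ :=
  ⨅ z : Fin d → ℤ, ‖x - y - (WithLp.equiv 2 (Fin d → ℝ)).symm (fun i => (z i : ℝ))‖

/-- The half-open unit cube `S = (-1/2, 1/2]^d`. -/
def cube (d : ℕ) : Set (EuclideanSpace ℝ (Fin d)) :=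
  {x | ∀ i, x i ∈ Set.Ioc (-(1/2) : ℝ) (1/2)}

/-- The random connection model: i.i.d. uniform points `X`, coupled Poisson counts `N`,
i.i.d. uniform edge variables `U`, with the three families mutually independent, and a
non-increasing connection function `g : [0,∞) → [0,1]` with finite positive integral `α`. -/
structure Model (d : ℕ) {Ω : Type*} [MeasurableSpace Ω] (P : Measure Ω) where
  g : ℝ → ℝ
  α : ℝ
  X : ℕ → Ω → EuclideanSpace ℝ (Fin d)
  N : ℕ → Ω → ℕ
  U : ℕ → ℕ → Ω → ℝ
  g_antitone : AntitoneOn g (Set.Ici 0)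
  g_mem : ∀ r : ℝ, 0 ≤ r → g r ∈ Set.Icc (0 : ℝ) 1
  g_integrable : MeasureTheory.Integrable (fun x : EuclideanSpace ℝ (Fin d) => g ‖x‖)
  α_def : α = ∫ x : EuclideanSpace ℝ (Fin d), g ‖x‖
  α_pos : 0 < α
  X_meas : ∀ i, Measurable (X i)
  X_unif : ∀ i : ℕ, 1 ≤ i → Measure.map (X i) P = volume.restrict (cube d)
  X_indep : iIndepFun
    (fun i : {i : ℕ // 1 ≤ i} => X i) P
  N_meas : ∀ n, Measurable (N n)
  N_mono : ∀ ω, Monotone fun n => N n ω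
  N_poisson : ∀ n k : ℕ,
    P {ω | N n ω = k} = ENNReal.ofReal (Real.exp (-(n : ℝ)) * (n : ℝ) ^ k / k.factorial)
  U_meas : ∀ i j, Measurable (U i j)
  U_unif : ∀ i j : ℕ, 1 ≤ i → i < j →
    Measure.map (U i j) P = volume.restrict (Set.Icc (0 : ℝ) 1)
  U_indep : iIndepFun
    (fun p : {p : ℕ × ℕ // 1 ≤ p.1 ∧ p.1 < p.2} => U p.1.1 p.1.2) P
  families_indep : iIndep
    (![MeasurableSpace.comap (fun ω => fun i : ℕ => X i ω) inferInstance,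
       MeasurableSpace.comap (fun ω => fun n : ℕ => N n ω) inferInstance,
       MeasurableSpace.comap (fun ω => fun p : ℕ × ℕ => U p.1 p.2 ω) inferInstance]) P

variable {d : ℕ} {Ω : Type*} [MeasurableSpace Ω] {P : Measure Ω}

/-- Adjacency in the graph `G_n(r)`: vertices `1 ≤ i,j ≤ N_n` are joined iff
`U_{ij} ≤ g(dist(X_i,X_j)/r)`. -/
def adj (M : Model d P) (n : ℕ) (r : ℝ) (ω : Ω) (i j : ℕ) : Prop :=
  i ≠ j ∧ 1 ≤ i ∧ 1 ≤ j ∧ i ≤ M.N n ω ∧ j ≤ M.N n ω ∧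
    M.U (min i j) (max i j) ω ≤ M.g (torusDist (M.X i ω) (M.X j ω) / r)

/-- The degree of vertex `i` in `G_n(r)`. -/
def deg (M : Model d P) (n : ℕ) (r : ℝ) (ω : Ω) (i : ℕ) : ℕ :=
  {j : ℕ | adj M n r ω i j}.ncard

/-- `W_n(r)`, the number of isolated vertices of `G_n(r)`. -/
def isolatedCount (M : Model d P) (n : ℕ) (r : ℝ) (ω : Ω) : ℕ :=
  {i : ℕ | 1 ≤ i ∧ i ≤ M.N n ω ∧ deg M n r ω i = 0}.ncard


/-- `r̂_n(γ)` defined by `r̂_n(γ)^d = γ log n / (α n)`. -/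
def rhat (M : Model d P) (γ : ℝ) (n : ℕ) : ℝ :=
  (γ * Real.log n / (M.α * n)) ^ ((1 : ℝ) / d)

/-- `d_n`, the critical parameter for absence of isolated nodes. -/
def critRadius (M : Model d P) (n : ℕ) (ω : Ω) : ℝ :=
  sInf {r : ℝ | 0 < r ∧ isolatedCount M n r ω = 0}

/-- The maximum vertex degree `Δ_n` of `G_n(r)`. -/
def maxDeg (M : Model d P) (n : ℕ) (r : ℝ) (ω : Ω) : ℕ :=
  (Finset.Icc 1 (M.N n ω)).sup (deg M n r ω)

/-- The minimum vertex degree `δ_n` of `G_n(r)`. -/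
def minDeg (M : Model d P) (n : ℕ) (r : ℝ) (ω : Ω) : ℕ :=
  sInf {k : ℕ | ∃ i, 1 ≤ i ∧ i ≤ M.N n ω ∧ deg M n r ω i = k}

/-- The length (toroidal metric) of the longest edge of `G_n(r)` (`0` if there are no edges). -/
def longestEdge (M : Model d P) (n : ℕ) (r : ℝ) (ω : Ω) : ℝ :=
  sSup ({0} ∪ {t : ℝ | ∃ i j, adj M n r ω i j ∧ t = torusDist (M.X i ω) (M.X j ω)})

/-- Connectivity of `G_n(r)`: any two vertices are joined by a path. -/
def connectedGraph (M : Model d P) (n : ℕ) (r : ℝ) (ω : Ω) : Prop :=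
  ∀ i j : ℕ, 1 ≤ i → i ≤ M.N n ω → 1 ≤ j → j ≤ M.N n ω →
    Relation.ReflTransGen (adj M n r ω) i j

/-- `H(x) = 1 - x + x log x` (with `H(0) = 1`, since `log 0 = 0` in Lean). -/
def H (x : ℝ) : ℝ := 1 - x + x * Real.log x

/-- The inverse of the restriction of `H` to `[1, ∞)`. -/
def Hplusinv (y : ℝ) : ℝ := sInf {x : ℝ | 1 ≤ x ∧ y ≤ H x}

/-- The inverse of the restriction of `H` to `[0, 1]`. -/
def Hminusinv (y : ℝ) : ℝ := sInf {x : ℝ | 0 ≤ x ∧ H x ≤ y}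

/-- The standard normal distribution function. -/
def stdNormalCDF (x : ℝ) : ℝ :=
  ∫ t in Set.Iic x, Real.exp (-t ^ 2 / 2) / Real.sqrt (2 * Real.pi)

section Kernel

variable {E : Type*} [MeasurableSpace E] {μ : Measure E} [IsProbabilityMeasure μ]

lemma integrable_of_mem_unitInterval {f : E → ℝ} (hf : Measurable f)
    (h : ∀ x, f x ∈ Icc (0 : ℝ) 1) : Integrable f μ :=
  Integrable.of_bound hf.aestronglyMeasurable 1 (ae_of_all _ fun x => by
    rw [Real.norm_eq_abs, abs_of_nonneg (h x).1]; exact (h x).2)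

lemma integral_mem_unitInterval {f : E → ℝ} (h : ∀ x, f x ∈ Icc (0 : ℝ) 1) :
    ∫ x, f x ∂μ ∈ Icc (0 : ℝ) 1 := by
  refine ⟨integral_nonneg fun x => (h x).1, ?_⟩
  by_cases hi : Integrable f μ
  · simpa using integral_mono hi (integrable_const (1 : ℝ)) fun x => (h x).2
  · rw [integral_undef hi]; exact zero_le_one

lemma pow_le_pow_add_of_le {s t b j : ℝ} (hs : 0 ≤ s) (ht : 0 ≤ t) (hsb : s ≤ b) (hj : 0 ≤ j)
    (hst : s - t ≤ j) (k : ℕ) : s ^ k ≤ t ^ k + k * (j * b ^ (k - 1)) := by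
  have hb : 0 ≤ b := hs.trans hsb
  rcases le_total s t with h | h
  · have := pow_le_pow_left₀ hs h k
    have : 0 ≤ k * (j * b ^ (k - 1)) := by positivity
    linarith
  · have h1 := (le_abs_self _).trans (abs_pow_sub_pow_le s t k)
    rw [abs_of_nonneg (sub_nonneg.2 h), abs_of_nonneg hs, abs_of_nonneg ht, max_eq_left h] at h1
    have h2 : (s - t) * k * s ^ (k - 1) ≤ j * k * b ^ (k - 1) := by gcongr
    linarith

variable {κ : E → E → ℝ}

/-- Integrated correlation bound for a kernel with values in `[0, 1]`: the probability that two
points both avoid `k` further points is, up to a small error, the product of the individual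
probabilities. -/
lemma integral_joint_pow_le (hm : Measurable (Function.uncurry κ))
    (h : ∀ x y, κ x y ∈ Icc (0 : ℝ) 1) {θ : ℝ} (hrow : ∀ x, ∫ z, κ x z ∂μ ≤ θ)
    (hcol : ∀ z, ∫ x, κ x z ∂μ ≤ θ) (k : ℕ) :
    ∫ p : E × E, (∫ z, (1 - κ p.1 z) * (1 - κ p.2 z) ∂μ) ^ k ∂(μ.prod μ) ≤
      (∫ x, (∫ z, (1 - κ x z) ∂μ) ^ k ∂μ) ^ 2 +
        k * θ ^ 2 * ∫ x, (∫ z, (1 - κ x z) ∂μ) ^ (k - 1) ∂μ := by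
  set Q : E → ℝ := fun x => ∫ z, (1 - κ x z) ∂μ with hQ
  set J : E × E → ℝ := fun p => ∫ z, κ p.1 z * κ p.2 z ∂μ with hJ
  set T : E × E → ℝ := fun p => ∫ z, (1 - κ p.1 z) * (1 - κ p.2 z) ∂μ with hT
  have hc : ∀ x y, 1 - κ x y ∈ Icc (0 : ℝ) 1 := fun x y =>
    ⟨by linarith [(h x y).2], by linarith [(h x y).1]⟩
  have mul_mem : ∀ {a b : ℝ}, a ∈ Icc (0 : ℝ) 1 → b ∈ Icc (0 : ℝ) 1 → a * b ∈ Icc (0 : ℝ) 1 :=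
    fun ha hb => ⟨mul_nonneg ha.1 hb.1, mul_le_one₀ ha.2 hb.1 hb.2⟩
  have pow_mem : ∀ {a : ℝ} (n : ℕ), a ∈ Icc (0 : ℝ) 1 → a ^ n ∈ Icc (0 : ℝ) 1 :=
    fun n ha => ⟨pow_nonneg ha.1 n, pow_le_one₀ ha.1 ha.2⟩
  have hκ1 : ∀ x, Measurable (κ x) := fun x => hm.comp measurable_prodMk_left
  have hκa : Measurable fun q : (E × E) × E => κ q.1.1 q.2 :=
    hm.comp (by fun_prop : Measurable fun q : (E × E) × E => (q.1.1, q.2))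
  have hκb : Measurable fun q : (E × E) × E => κ q.1.2 q.2 :=
    hm.comp (by fun_prop : Measurable fun q : (E × E) × E => (q.1.2, q.2))
  have hQm : Measurable Q :=
    ((measurable_const.sub hm).stronglyMeasurable.integral_prod_right (ν := μ)).measurable
  have hJm : Measurable J :=
    ((hκa.mul hκb).stronglyMeasurable.integral_prod_right (ν := μ)).measurable
  have hTm : Measurable T := (((measurable_const.sub hκa).mul
    (measurable_const.sub hκb)).stronglyMeasurable.integral_prod_right (ν := μ)).measurable
  have hQ01 : ∀ x, Q x ∈ Icc (0 : ℝ) 1 := fun x => integral_mem_unitInterval (hc x)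
  have hJ01 : ∀ p, J p ∈ Icc (0 : ℝ) 1 := fun p =>
    integral_mem_unitInterval fun z => mul_mem (h _ _) (h _ _)
  have hT01 : ∀ p, T p ∈ Icc (0 : ℝ) 1 := fun p =>
    integral_mem_unitInterval fun z => mul_mem (hc _ _) (hc _ _)
  have iκ : ∀ x, Integrable (κ x) μ := fun x => integrable_of_mem_unitInterval (hκ1 x) (h x)
  have iκκ : ∀ x y, Integrable (fun z => κ x z * κ y z) μ := fun x y =>
    integrable_of_mem_unitInterval ((hκ1 x).mul (hκ1 y)) fun z => mul_mem (h _ _) (h _ _)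
  have hQeq : ∀ x, Q x = 1 - ∫ z, κ x z ∂μ := fun x => by
    simp only [hQ]
    rw [integral_sub (integrable_const _) (iκ x)]; simp
  have hTeq : ∀ p, T p = 1 - ∫ z, κ p.1 z ∂μ - ∫ z, κ p.2 z ∂μ + J p := fun p => by
    have : ∀ z, (1 - κ p.1 z) * (1 - κ p.2 z) =
        1 - κ p.1 z - κ p.2 z + κ p.1 z * κ p.2 z := fun z => by ring
    simp only [hT, this]
    have i₁ : Integrable (fun z => 1 - κ p.1 z) μ := (integrable_const _).sub (iκ _)
    have i₂ : Integrable (fun z => 1 - κ p.1 z - κ p.2 z) μ := i₁.sub (iκ _)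
    rw [integral_add i₂ (iκκ _ _), integral_sub i₁ (iκ _),
      integral_sub (integrable_const _) (iκ _)]
    simp [hJ]
  have hI0 : ∀ x, 0 ≤ ∫ z, κ x z ∂μ := fun x => integral_nonneg fun z => (h x z).1
  have hTQ : ∀ p, T p ≤ Q p.2 := fun p => by
    refine integral_mono (integrable_of_mem_unitInterval
      ((measurable_const.sub (hκ1 _)).mul (measurable_const.sub (hκ1 _)))
      fun z => mul_mem (hc _ _) (hc _ _))
      (integrable_of_mem_unitInterval (measurable_const.sub (hκ1 _)) (hc _)) fun z => ?_
    exact mul_le_of_le_one_left (hc _ _).1 (hc _ _).2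
  have hpt : ∀ p : E × E,
      T p ^ k ≤ Q p.1 ^ k * Q p.2 ^ k + k * (J p * Q p.2 ^ (k - 1)) := fun p => by
    rw [← mul_pow]
    refine pow_le_pow_add_of_le (hT01 p).1 (mul_nonneg (hQ01 _).1 (hQ01 _).1) (hTQ p)
      (hJ01 p).1 ?_ k
    rw [hTeq, hQeq, hQeq]
    nlinarith [mul_nonneg (hI0 p.1) (hI0 p.2)]
  have iQ : ∀ n : ℕ, Integrable (fun x => Q x ^ n) μ := fun n =>
    integrable_of_mem_unitInterval (hQm.pow_const n) fun x => pow_mem n (hQ01 x)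
  have iT : Integrable (fun p => T p ^ k) (μ.prod μ) :=
    integrable_of_mem_unitInterval (hTm.pow_const k) fun x => pow_mem k (hT01 x)
  have iJQ : Integrable (fun p : E × E => J p * Q p.2 ^ (k - 1)) (μ.prod μ) :=
    integrable_of_mem_unitInterval (hJm.mul ((hQm.comp measurable_snd).pow_const _))
      fun x => mul_mem (hJ01 x) (pow_mem _ (hQ01 _))
  have iQQ : Integrable (fun p : E × E => Q p.1 ^ k * Q p.2 ^ k) (μ.prod μ) := (iQ k).mul_prod (iQ k)
  have hJint : ∀ y, ∫ x, J (x, y) ∂μ ≤ θ ^ 2 := fun y => by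
    have e : ∫ x, J (x, y) ∂μ = ∫ z, ∫ x, κ x z * κ y z ∂μ ∂μ := by
      refine integral_integral_swap (f := fun x z => κ x z * κ y z) ?_
      refine integrable_of_mem_unitInterval ?_ fun p => mul_mem (h _ _) (h _ _)
      exact hm.mul ((hκ1 y).comp measurable_snd)
    have hθ : 0 ≤ θ := (hI0 y).trans (hrow y)
    rw [e]
    calc ∫ z, ∫ x, κ x z * κ y z ∂μ ∂μ = ∫ z, (∫ x, κ x z ∂μ) * κ y z ∂μ := by
          simp_rw [integral_mul_const]
      _ ≤ ∫ z, θ * κ y z ∂μ := by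
          refine integral_mono (integrable_of_mem_unitInterval ?_ fun z =>
            mul_mem (integral_mem_unitInterval fun x => h _ _) (h _ _)) ((iκ y).const_mul θ)
            fun z => mul_le_mul_of_nonneg_right (hcol z) (h _ _).1
          exact (hm.stronglyMeasurable.integral_prod_left (μ := μ)).measurable.mul (hκ1 y)
      _ = θ * ∫ z, κ y z ∂μ := integral_const_mul _ _
      _ ≤ θ ^ 2 := by rw [sq]; exact mul_le_mul_of_nonneg_left (hrow y) hθ
  calc ∫ p, T p ^ k ∂(μ.prod μ)
      ≤ ∫ p : E × E, (Q p.1 ^ k * Q p.2 ^ k + k * (J p * Q p.2 ^ (k - 1))) ∂(μ.prod μ) :=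
        integral_mono iT (iQQ.add (iJQ.const_mul _)) hpt
    _ = (∫ x, Q x ^ k ∂μ) ^ 2 + k * ∫ p : E × E, J p * Q p.2 ^ (k - 1) ∂(μ.prod μ) := by
        rw [integral_add iQQ (iJQ.const_mul _), integral_const_mul,
          integral_prod_mul (fun x => Q x ^ k) (fun x => Q x ^ k), sq]
    _ ≤ _ := by
        rw [mul_assoc]
        gcongr
        rw [integral_prod_symm _ iJQ, ← integral_const_mul]
        refine integral_mono iJQ.integral_prod_right ((iQ _).const_mul _) fun y => ?_
        simp only [integral_mul_const]
        exact mul_le_mul_of_nonneg_right (hJint y) (pow_nonneg (hQ01 y).1 _)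

end Kernel

/-- The second moment method for a finite family of events with equal probabilities. -/
lemma measureReal_none_mul_sq_le {ι : Type*} [IsProbabilityMeasure P] {s : Finset ι}
    {A : ι → Set Ω} (hA : ∀ i, MeasurableSet (A i)) {p q : ℝ} (hq : 0 ≤ q)
    (hp : ∀ i ∈ s, P.real (A i) = p)
    (hpq : ∀ i ∈ s, ∀ j ∈ s, i ≠ j → P.real (A i ∩ A j) ≤ q) :
    P.real (⋂ i ∈ s, (A i)ᶜ) * (s.card * p) ^ 2 ≤
      s.card * p + s.card ^ 2 * (q - p ^ 2) := by
  classical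
  set m : ℝ := s.card * p with hm
  set W : Ω → ℝ := fun ω => ∑ i ∈ s, (A i).indicator 1 ω with hW
  set B : Set Ω := ⋂ i ∈ s, (A i)ᶜ with hB
  have hBm : MeasurableSet B := Finset.measurableSet_biInter _ fun i _ => (hA i).compl
  have i1 : ∀ i, Integrable ((A i).indicator (1 : Ω → ℝ)) P := fun i =>
    (integrable_const (1 : ℝ)).indicator (hA i)
  have iW : Integrable W P := integrable_finsetSum _ fun i _ => i1 i
  have hsq : ∀ ω, W ω ^ 2 = ∑ i ∈ s, ∑ j ∈ s, (A i ∩ A j).indicator (1 : Ω → ℝ) ω := fun ω => by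
    simp only [hW, sq, Finset.sum_mul_sum]
    refine Finset.sum_congr rfl fun i _ => Finset.sum_congr rfl fun j _ => ?_
    rw [inter_indicator_one]; rfl
  have i2 : ∀ i j, Integrable ((A i ∩ A j).indicator (1 : Ω → ℝ)) P := fun i j =>
    (integrable_const (1 : ℝ)).indicator ((hA i).inter (hA j))
  have iW2 : Integrable (fun ω => W ω ^ 2) P := by
    simp_rw [hsq]
    exact integrable_finsetSum _ fun i _ => integrable_finsetSum _ fun j _ => i2 i j
  have eW : ∫ ω, W ω ∂P = m := by
    simp only [hW]
    rw [integral_finsetSum _ fun i _ => i1 i]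
    simp only [integral_indicator_one (hA _)]
    rw [Finset.sum_congr rfl hp, Finset.sum_const, nsmul_eq_mul]
  have eW2 : ∫ ω, W ω ^ 2 ∂P ≤ m + s.card ^ 2 * q := by
    simp_rw [hsq]
    rw [integral_finsetSum _ fun i _ => integrable_finsetSum _ fun j _ => i2 i j]
    have : ∀ i ∈ s, ∫ ω, ∑ j ∈ s, (A i ∩ A j).indicator (1 : Ω → ℝ) ω ∂P ≤ p + s.card * q := by
      intro i hi
      rw [integral_finsetSum _ fun j _ => i2 i j]
      simp only [integral_indicator_one ((hA _).inter (hA _))]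
      rw [← Finset.add_sum_erase s _ hi, inter_self, hp i hi]
      gcongr
      calc ∑ j ∈ s.erase i, P.real (A i ∩ A j) ≤ ∑ j ∈ s.erase i, q :=
            Finset.sum_le_sum fun j hj => hpq i hi j (Finset.mem_of_mem_erase hj)
              (Finset.ne_of_mem_erase hj).symm
        _ ≤ s.card * q := by
            rw [Finset.sum_const, nsmul_eq_mul]
            gcongr
            exact Finset.erase_subset _ _
    refine (Finset.sum_le_sum this).trans (le_of_eq ?_)
    rw [Finset.sum_const, nsmul_eq_mul]; ring
  have hlow : P.real B * m ^ 2 ≤ ∫ ω, (W ω - m) ^ 2 ∂P := by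
    have : P.real B * m ^ 2 = ∫ ω, B.indicator (fun _ => m ^ 2) ω ∂P := by
      rw [integral_indicator_const _ hBm, smul_eq_mul]
    rw [this]
    refine integral_mono ((integrable_const _).indicator hBm) ?_ fun ω => ?_
    · have : (fun ω => (W ω - m) ^ 2) = fun ω => W ω ^ 2 - 2 * m * W ω + m ^ 2 := by
        ext ω; ring
      rw [this]
      exact (iW2.sub (iW.const_mul _)).add (integrable_const _)
    · by_cases hω : ω ∈ B
      · have : W ω = 0 := Finset.sum_eq_zero fun i hi =>
          indicator_of_notMem (mem_iInter₂.1 hω i hi) _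
        simp [hω, this]
      · simp only [hω, not_false_eq_true, indicator_of_notMem]
        positivity
  have hexp : ∫ ω, (W ω - m) ^ 2 ∂P = ∫ ω, W ω ^ 2 ∂P - m ^ 2 := by
    have : (fun ω => (W ω - m) ^ 2) = fun ω => W ω ^ 2 - 2 * m * W ω + m ^ 2 := by
      ext ω; ring
    have i3 : Integrable (fun ω => W ω ^ 2 - 2 * m * W ω) P := iW2.sub (iW.const_mul _)
    rw [this, integral_add i3 (integrable_const _), integral_sub iW2 (iW.const_mul _),
      integral_const_mul, eW]
    simp; ring
  have : m ^ 2 = s.card ^ 2 * p ^ 2 := by rw [hm]; ring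
  linarith

section Torus

lemma torusDist_nonneg (x y : EuclideanSpace ℝ (Fin d)) : 0 ≤ torusDist x y :=
  Real.iInf_nonneg fun _ => norm_nonneg _

lemma torusDist_le (x y : EuclideanSpace ℝ (Fin d)) (z : Fin d → ℤ) :
    torusDist x y ≤ ‖x - y - (WithLp.equiv 2 (Fin d → ℝ)).symm (fun i => (z i : ℝ))‖ :=
  ciInf_le ⟨0, by rintro _ ⟨z, rfl⟩; exact norm_nonneg _⟩ z

lemma torusDist_le_norm (x y : EuclideanSpace ℝ (Fin d)) : torusDist x y ≤ ‖x - y‖ := by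
  refine (torusDist_le x y 0).trans (le_of_eq ?_)
  congr 1
  ext i
  simp

lemma torusDist_comm (x y : EuclideanSpace ℝ (Fin d)) : torusDist x y = torusDist y x := by
  refine (Equiv.neg (Fin d → ℤ)).iInf_congr fun z => ?_
  rw [← norm_neg]
  congr 1
  ext i
  simp only [Equiv.neg_apply, Pi.neg_apply, PiLp.neg_apply, PiLp.sub_apply,
    WithLp.equiv_symm_apply]
  push_cast
  ring

lemma exists_torusDist_eq (x y : EuclideanSpace ℝ (Fin d)) : ∃ z : Fin d → ℤ,
    torusDist x y = ‖x - y - (WithLp.equiv 2 (Fin d → ℝ)).symm (fun i => (z i : ℝ))‖ := by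
  refine ⟨fun i => round (x i - y i), le_antisymm (torusDist_le x y _) (le_ciInf fun z => ?_)⟩
  rw [EuclideanSpace.norm_eq, EuclideanSpace.norm_eq]
  refine Real.sqrt_le_sqrt (Finset.sum_le_sum fun i _ => ?_)
  have := round_le (x i - y i) (z i)
  simp only [Real.norm_eq_abs]
  exact pow_le_pow_left₀ (abs_nonneg _) (by simpa using this) 2

lemma measurable_torusDist : Measurable (Function.uncurry (torusDist (d := d))) := by
  refine Measurable.iInf fun z => ?_
  exact ((measurable_fst.sub measurable_snd).sub_const _).norm

lemma measurableSet_cube : MeasurableSet (cube d) := by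
  have : cube d = ⋂ i, (fun x : EuclideanSpace ℝ (Fin d) => x i) ⁻¹' Ioc (-(1 / 2) : ℝ) (1 / 2) := by
    ext x; simp [cube]
  rw [this]
  exact MeasurableSet.iInter fun i => measurableSet_Ioc.preimage (by fun_prop)

lemma tsum_indicator_cube_le (f : ENNReal) (z : EuclideanSpace ℝ (Fin d)) :
    ∑' w : Fin d → ℤ, (cube d).indicator (fun _ => f)
      (z - (WithLp.equiv 2 (Fin d → ℝ)).symm (fun i => (w i : ℝ))) ≤ f := by
  by_cases h : ∃ w : Fin d → ℤ, z - (WithLp.equiv 2 (Fin d → ℝ)).symm (fun i => (w i : ℝ)) ∈ cube d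
  · obtain ⟨w, hw⟩ := h
    rw [tsum_eq_single w]
    · exact indicator_le_self _ _ _
    · intro w' hw'
      refine indicator_of_notMem (fun hmem => hw' (funext fun i => ?_)) _
      have h1 := hw i
      have h2 := hmem i
      simp only [PiLp.sub_apply, mem_Ioc, WithLp.equiv_symm_apply] at h1 h2
      have h3 : ((w' i - w i : ℤ) : ℝ) < 1 := by push_cast; linarith [h1.1, h1.2, h2.1, h2.2]
      have h4 : ((w i - w' i : ℤ) : ℝ) < 1 := by push_cast; linarith [h1.1, h1.2, h2.1, h2.2]
      have h5 : w' i - w i < 1 := by exact_mod_cast h3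
      have h6 : w i - w' i < 1 := by exact_mod_cast h4
      omega
  · push Not at h
    rw [tsum_congr fun w => indicator_of_notMem (h w) _, tsum_zero]
    exact zero_le

end Torus

section Connection

/-- The probability that points at `x` and `y` are joined in the model with parameter `r`. -/
def connProb (M : Model d P) (r : ℝ) (x y : EuclideanSpace ℝ (Fin d)) : ℝ :=
  M.g (torusDist x y / r)

lemma measurable_g_comp {E : Type*} [MeasurableSpace E] (M : Model d P) {f : E → ℝ}
    (hf : Measurable f) (h0 : ∀ x, 0 ≤ f x) : Measurable fun x => M.g (f x) := by
  have hanti : Antitone fun t : ℝ => M.g (max t 0) := fun a b hab =>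
    M.g_antitone (mem_Ici.2 (le_max_right _ _)) (mem_Ici.2 (le_max_right _ _)) (max_le_max_right 0 hab)
  have h := hanti.measurable.comp hf
  simpa only [Function.comp_def, max_eq_left (h0 _)] using h

lemma measurable_connProb (M : Model d P) {r : ℝ} (hr : 0 < r) :
    Measurable (Function.uncurry (connProb M r)) :=
  measurable_g_comp M (measurable_torusDist.div_const r)
    fun p => div_nonneg (torusDist_nonneg p.1 p.2) hr.le

lemma measurable_connProb_comp {E : Type*} [MeasurableSpace E] (M : Model d P) {r : ℝ}
    (hr : 0 < r) {f h : E → EuclideanSpace ℝ (Fin d)} (hf : Measurable f) (hh : Measurable h) :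
    Measurable fun a => connProb M r (f a) (h a) :=
  measurable_g_comp M ((measurable_torusDist.comp (hf.prodMk hh)).div_const r)
    fun a => div_nonneg (torusDist_nonneg (f a) (h a)) hr.le

lemma connProb_mem (M : Model d P) {r : ℝ} (hr : 0 < r) (x y : EuclideanSpace ℝ (Fin d)) :
    connProb M r x y ∈ Icc (0 : ℝ) 1 :=
  M.g_mem _ (div_nonneg (torusDist_nonneg x y) hr.le)

lemma connProb_comm (M : Model d P) (r : ℝ) (x y : EuclideanSpace ℝ (Fin d)) :
    connProb M r x y = connProb M r y x := by
  rw [connProb, torusDist_comm, connProb]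

lemma connProb_mono (M : Model d P) {r s : ℝ} (hr : 0 < r) (hrs : r ≤ s)
    (x y : EuclideanSpace ℝ (Fin d)) : connProb M r x y ≤ connProb M s x y :=
  M.g_antitone (div_nonneg (torusDist_nonneg x y) (hr.trans_le hrs).le)
    (div_nonneg (torusDist_nonneg x y) hr.le)
    (div_le_div_of_nonneg_left (torusDist_nonneg x y) hr hrs)

lemma lintegral_g_comp_norm_div (M : Model d P) {r : ℝ} (hr : 0 < r)
    (x : EuclideanSpace ℝ (Fin d)) :
    ∫⁻ z, ENNReal.ofReal (M.g (‖x - z‖ / r)) = ENNReal.ofReal (M.α * r ^ d) := by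
  have hfun : (fun z : EuclideanSpace ℝ (Fin d) => M.g (‖z‖ / r)) =
      fun z => M.g ‖r⁻¹ • z‖ := by
    ext z
    rw [norm_smul, norm_inv, Real.norm_of_nonneg hr.le, div_eq_inv_mul]
  have h_int : Integrable fun z : EuclideanSpace ℝ (Fin d) => M.g (‖z‖ / r) := by
    rw [hfun]
    exact (integrable_comp_smul_iff volume _ (inv_ne_zero hr.ne')).2 M.g_integrable
  rw [← ofReal_integral_eq_lintegral_ofReal (h_int.comp_sub_left x)
    (ae_of_all _ fun z => (M.g_mem _ (div_nonneg (norm_nonneg _) hr.le)).1),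
    integral_sub_left_eq_self (fun z => M.g (‖z‖ / r)) volume x, hfun,
    Measure.integral_comp_smul volume (fun z => M.g ‖z‖), ← M.α_def]
  congr 1
  rw [finrank_euclideanSpace_fin, inv_pow, inv_inv, abs_of_nonneg (by positivity), smul_eq_mul,
    mul_comm]

lemma lintegral_connProb_le (M : Model d P) {r : ℝ} (hr : 0 < r)
    (x : EuclideanSpace ℝ (Fin d)) :
    ∫⁻ z in cube d, ENNReal.ofReal (connProb M r x z) ≤ ENNReal.ofReal (M.α * r ^ d) := by
  set v : (Fin d → ℤ) → EuclideanSpace ℝ (Fin d) :=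
    fun w => (WithLp.equiv 2 (Fin d → ℝ)).symm (fun i => (w i : ℝ)) with hv
  set F : EuclideanSpace ℝ (Fin d) → ENNReal :=
    fun z => ENNReal.ofReal (M.g (‖x - z‖ / r)) with hF
  have hFm : Measurable F :=
    (measurable_g_comp M (by fun_prop) fun z => by positivity).ennreal_ofReal
  have hvm : ∀ w, Measurable fun z => z + v w := fun w => measurable_add_const _
  calc ∫⁻ z in cube d, ENNReal.ofReal (connProb M r x z)
      ≤ ∫⁻ z in cube d, ∑' w, F (z + v w) := by
        refine lintegral_mono fun z => ?_
        obtain ⟨w, hw⟩ := exists_torusDist_eq x z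
        refine le_trans (le_of_eq ?_) (ENNReal.le_tsum w)
        rw [connProb, hw, hF, hv]
        simp only [sub_add_eq_sub_sub]
    _ = ∑' w, ∫⁻ z in cube d, F (z + v w) :=
        lintegral_tsum fun w => (hFm.comp (hvm w)).aemeasurable
    _ = ∑' w, ∫⁻ z, (cube d).indicator (fun _ => F z) (z - v w) := by
        refine tsum_congr fun w => ?_
        rw [← lintegral_indicator measurableSet_cube,
          ← lintegral_add_right_eq_self (fun z => (cube d).indicator (fun _ => F z) (z - v w))
            (v w)]
        refine lintegral_congr fun z => ?_
        by_cases hz : z ∈ cube d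
        · rw [indicator_of_mem hz, indicator_of_mem (by rwa [add_sub_cancel_right])]
        · rw [indicator_of_notMem hz, indicator_of_notMem (by rwa [add_sub_cancel_right])]
    _ = ∫⁻ z, ∑' w, (cube d).indicator (fun _ => F z) (z - v w) := by
        refine (lintegral_tsum fun w => Measurable.aemeasurable ?_).symm
        have : (fun z => (cube d).indicator (fun _ => F z) (z - v w)) =
            ((fun z => z - v w) ⁻¹' cube d).indicator F := by
          rfl
        rw [this]
        exact hFm.indicator (measurableSet_cube.preimage (measurable_sub_const _))
    _ ≤ ∫⁻ z, F z := lintegral_mono fun z => tsum_indicator_cube_le _ z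
    _ = _ := lintegral_g_comp_norm_div M hr x

lemma integral_connProb_le (M : Model d P) {r : ℝ} (hr : 0 < r)
    (x : EuclideanSpace ℝ (Fin d)) :
    ∫ z in cube d, connProb M r x z ≤ M.α * r ^ d := by
  rw [integral_eq_lintegral_of_nonneg_ae (ae_of_all _ fun z => (connProb_mem M hr x z).1)
    (measurable_connProb M hr).of_uncurry_left.aestronglyMeasurable]
  refine ENNReal.toReal_le_of_le_ofReal (mul_nonneg M.α_pos.le (by positivity)) ?_
  exact lintegral_connProb_le M hr x

lemma exists_pos_g_pos (hd : d ≠ 0) (M : Model d P) : ∃ t, 0 < t ∧ 0 < M.g t := by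
  by_contra! h
  have : Nonempty (Fin d) := ⟨⟨0, Nat.pos_of_ne_zero hd⟩⟩
  have hzero : (fun x : EuclideanSpace ℝ (Fin d) => M.g ‖x‖) =ᵐ[volume] 0 := by
    have h0 : ∀ᵐ x : EuclideanSpace ℝ (Fin d), x ≠ 0 := by
      simp [ae_iff]
    filter_upwards [h0] with x hx
    exact le_antisymm (h _ (norm_pos_iff.2 hx)) (M.g_mem _ (norm_nonneg x)).1
  have := M.α_pos
  rw [M.α_def, integral_congr_ae hzero] at this
  simp at this

lemma isProbabilityMeasure_restrict_cube [IsProbabilityMeasure P] (M : Model d P) :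
    IsProbabilityMeasure (volume.restrict (cube d)) := by
  rw [← M.X_unif 1 le_rfl]
  exact Measure.isProbabilityMeasure_map (M.X_meas 1).aemeasurable

lemma integrable_connProb [IsProbabilityMeasure P] (M : Model d P) {r : ℝ} (hr : 0 < r)
    (x : EuclideanSpace ℝ (Fin d)) : Integrable (connProb M r x) (volume.restrict (cube d)) := by
  have := isProbabilityMeasure_restrict_cube M
  exact integrable_of_mem_unitInterval
    (measurable_connProb M hr).of_uncurry_left (connProb_mem M hr x)

lemma exists_box_subset_cube {x : EuclideanSpace ℝ (Fin d)} (hx : x ∈ cube d) {h : ℝ}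
    (h0 : 0 ≤ h) (h1 : h ≤ 1 / 2) : ∃ B ⊆ cube d, MeasurableSet B ∧
      volume B = ENNReal.ofReal (h ^ d) ∧ ∀ z ∈ B, ‖x - z‖ ≤ d * h := by
  set lo : Fin d → ℝ := fun i => if x i ≤ 0 then x i else x i - h with hlo
  have hlox : ∀ i, lo i ≤ x i ∧ x i ≤ lo i + h ∧ -(1 / 2) < lo i ∧ lo i + h ≤ 1 / 2 := fun i => by
    have := hx i
    simp only [hlo]
    split_ifs with hi
    · exact ⟨le_rfl, by linarith, this.1, by linarith⟩
    · exact ⟨by linarith, by linarith, by linarith, by linarith [this.2]⟩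
  have hmp := EuclideanSpace.volume_preserving_symm_measurableEquiv_toLp (Fin d)
  refine ⟨(MeasurableEquiv.toLp 2 (Fin d → ℝ)).symm ⁻¹' Icc lo (fun i => lo i + h), ?_, ?_, ?_, ?_⟩
  · intro z hz i
    have h2 := hz.1 i
    have h3 := hz.2 i
    have h4 := hlox i
    simp at h2 h3
    exact ⟨by linarith, by linarith⟩
  · exact measurableSet_Icc.preimage (MeasurableEquiv.measurable _)
  · rw [hmp.measure_preimage measurableSet_Icc.nullMeasurableSet, Real.volume_Icc_pi]
    simp [ENNReal.ofReal_pow h0]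
  · intro z hz
    rw [EuclideanSpace.norm_eq]
    refine Real.sqrt_le_iff.2 ⟨by positivity, ?_⟩
    calc ∑ i, ‖(x - z) i‖ ^ 2 ≤ ∑ _i : Fin d, h ^ 2 := by
          refine Finset.sum_le_sum fun i _ => ?_
          have h2 := hz.1 i
          have h3 := hz.2 i
          have h4 := hlox i
          simp at h2 h3
          refine pow_le_pow_left₀ (norm_nonneg _) ?_ 2
          rw [Real.norm_eq_abs, PiLp.sub_apply]
          exact abs_le.2 ⟨by linarith, by linarith⟩
      _ = d * h ^ 2 := by simp
      _ ≤ (d * h) ^ 2 := by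
          rw [mul_pow]
          gcongr
          exact_mod_cast Nat.le_self_pow two_ne_zero d

lemma exists_le_integral_connProb [IsProbabilityMeasure P] (hd : d ≠ 0) (M : Model d P) :
    ∃ η > 0, ∃ r₀ > 0, ∀ r, 0 < r → r ≤ r₀ → ∀ x ∈ cube d,
      η * r ^ d ≤ ∫ z in cube d, connProb M r x z := by
  obtain ⟨t, ht, hgt⟩ := exists_pos_g_pos hd M
  have hd' : (0 : ℝ) < d := by positivity
  refine ⟨M.g t * (t / d) ^ d, by positivity, d / (2 * t), by positivity, fun r hr hr0 x hx => ?_⟩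
  have hh : t * r / d ≤ 1 / 2 := by
    rw [le_div_iff₀ (by positivity)] at hr0
    rw [div_le_iff₀ hd']; linarith
  obtain ⟨B, hBc, hBm, hBv, hB⟩ := exists_box_subset_cube hx (h := t * r / d) (by positivity) hh
  have h_int := integrable_connProb M hr x
  calc M.g t * (t / d) ^ d * r ^ d = ∫ _z in B, M.g t := by
        rw [setIntegral_const, measureReal_def, hBv, ENNReal.toReal_ofReal (by positivity),
          smul_eq_mul, mul_div_right_comm, mul_pow]
        ring
    _ ≤ ∫ z in B, connProb M r x z := by
        refine setIntegral_mono_on ?_ (IntegrableOn.mono_set h_int hBc) hBm fun z hz => ?_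
        · rw [integrableOn_const_iff]; right; rw [hBv]; exact ENNReal.ofReal_lt_top
        · refine M.g_antitone (div_nonneg (torusDist_nonneg x z) hr.le) ht.le ?_
          rw [div_le_iff₀ hr]
          refine (torusDist_le_norm x z).trans ((hB z hz).trans (le_of_eq ?_))
          field_simp
    _ ≤ ∫ z in cube d, connProb M r x z :=
        setIntegral_mono_set h_int (ae_of_all _ fun z => (connProb_mem M hr x z).1)
          hBc.eventuallyLE

end Connection

section Avoidance

/-- The event that vertex `i + 1` is joined to none of the vertices `j + 1`, `j ∈ F`. -/
def avoid (M : Model d P) (r : ℝ) (i : ℕ) (F : Finset ℕ) : Set Ω :=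
  {ω | ∀ j ∈ F, connProb M r (M.X (i + 1) ω) (M.X (j + 1) ω) <
    M.U (min i j + 1) (max i j + 1) ω}

lemma measurableSet_avoid (M : Model d P) {r : ℝ} (hr : 0 < r) (i : ℕ) (F : Finset ℕ) :
    MeasurableSet (avoid M r i F) := by
  have : avoid M r i F = ⋂ j ∈ F, {ω | connProb M r (M.X (i + 1) ω) (M.X (j + 1) ω) <
      M.U (min i j + 1) (max i j + 1) ω} := by
    ext ω; simp [avoid]
  rw [this]
  refine Finset.measurableSet_biInter _ fun j _ => measurableSet_lt ?_ (M.U_meas _ _)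
  exact measurable_connProb_comp M hr (M.X_meas _) (M.X_meas _)

lemma measure_forall_lt_uniform {ι : Type*} [Fintype ι] {V : ι → Ω → ℝ} (hV : iIndepFun V P)
    (hm : ∀ q, Measurable (V q))
    (hmap : ∀ q, Measure.map (V q) P = volume.restrict (Icc (0 : ℝ) 1)) {a : ι → ℝ}
    (ha : ∀ q, a q ∈ Icc (0 : ℝ) 1) :
    P {ω | ∀ q, a q < V q ω} = ∏ q, ENNReal.ofReal (1 - a q) := by
  have h := hV.measure_inter_preimage_eq_mul (S := Finset.univ) (sets := fun q => Ioi (a q))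
    fun q _ => measurableSet_Ioi
  have e : {ω | ∀ q, a q < V q ω} = ⋂ q ∈ Finset.univ, V q ⁻¹' Ioi (a q) := by
    ext ω; simp
  rw [e, h]
  refine Finset.prod_congr rfl fun q _ => ?_
  rw [← Measure.map_apply (hm q) measurableSet_Ioi, hmap q,
    Measure.restrict_apply measurableSet_Ioi]
  have : Ioi (a q) ∩ Icc (0 : ℝ) 1 = Ioc (a q) 1 := by
    ext t
    simp only [mem_inter_iff, mem_Ioi, mem_Icc, mem_Ioc]
    exact ⟨fun h => ⟨h.1, h.2.2⟩, fun h => ⟨h.1, ((ha q).1.trans_lt h.1).le, h.2⟩⟩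
  rw [this, Real.volume_Ioc]

/-- Integrating out an independent second coordinate. -/
lemma lintegral_indepFun_eq {β γ : Type*} [MeasurableSpace β] [MeasurableSpace γ]
    [IsProbabilityMeasure P] {Y : Ω → β} {Z : Ω → γ} (h : IndepFun Y Z P) (hY : Measurable Y)
    (hZ : Measurable Z) {f : β × γ → ENNReal} (hf : Measurable f) :
    ∫⁻ ω, f (Y ω, Z ω) ∂P = ∫⁻ ω, ∫⁻ ω', f (Y ω, Z ω') ∂P ∂P := by
  have : IsProbabilityMeasure (P.map Z) := Measure.isProbabilityMeasure_map hZ.aemeasurable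
  rw [← lintegral_map (f := f) (g := fun ω => (Y ω, Z ω)) hf (hY.prodMk hZ),
    (indepFun_iff_map_prod_eq_prod_map_map hY.aemeasurable hZ.aemeasurable).1 h,
    lintegral_prod _ hf.aemeasurable, lintegral_map hf.lintegral_prod_right' hY]
  refine lintegral_congr fun ω => ?_
  exact lintegral_map (hf.comp measurable_prodMk_left) hZ

lemma measure_iInter_avoid_eq_lintegral_prod [IsProbabilityMeasure P] (M : Model d P) {r : ℝ}
    (hr : 0 < r) {T F : Finset ℕ} (hTF : Disjoint T F) :
    P (⋂ i ∈ T, avoid M r i F) = ∫⁻ ω, ∏ q : T × F,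
      ENNReal.ofReal (1 - connProb M r (M.X (q.1 + 1) ω) (M.X (q.2 + 1) ω)) ∂P := by
  have hX : Measurable fun ω (i : ℕ) => M.X i ω := measurable_pi_lambda _ M.X_meas
  have hU : Measurable fun ω (p : ℕ × ℕ) => M.U p.1 p.2 ω :=
    measurable_pi_lambda _ fun p => M.U_meas _ _
  have hind : IndepFun (fun ω (i : ℕ) => M.X i ω) (fun ω (p : ℕ × ℕ) => M.U p.1 p.2 ω) P := by
    rw [IndepFun_iff_Indep]
    exact M.families_indep.indep (i := 0) (j := 2) (by decide)
  set S : Set ((ℕ → EuclideanSpace ℝ (Fin d)) × (ℕ × ℕ → ℝ)) :=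
    {y | ∀ q : T × F, connProb M r (y.1 (q.1 + 1)) (y.1 (q.2 + 1)) <
      y.2 (min (q.1 : ℕ) q.2 + 1, max (q.1 : ℕ) q.2 + 1)} with hS
  have hSm : MeasurableSet S := by
    have : S = ⋂ q : T × F, {y | connProb M r (y.1 (q.1 + 1)) (y.1 (q.2 + 1)) <
      y.2 (min (q.1 : ℕ) q.2 + 1, max (q.1 : ℕ) q.2 + 1)} := by ext y; simp [hS]
    rw [this]
    refine MeasurableSet.iInter fun q => measurableSet_lt ?_ (by fun_prop)
    exact measurable_connProb_comp M hr (by fun_prop) (by fun_prop)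
  have hevent : (⋂ i ∈ T, avoid M r i F) =
      (fun ω => ((fun i : ℕ => M.X i ω), fun p : ℕ × ℕ => M.U p.1 p.2 ω)) ⁻¹' S := by
    ext ω
    simp [avoid, hS]
  have hV : iIndepFun (fun (q : T × F) ω =>
      M.U (min (q.1 : ℕ) q.2 + 1) (max (q.1 : ℕ) q.2 + 1) ω) P := by
    have hne : ∀ q : T × F, (q.1 : ℕ) ≠ q.2 := fun q =>
      Finset.disjoint_left.1 hTF q.1.2 |> fun h e => h (e ▸ q.2.2)
    refine M.U_indep.precomp (g := fun q : T × F =>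
      ⟨(min (q.1 : ℕ) q.2 + 1, max (q.1 : ℕ) q.2 + 1), by simp, by
        have := hne q
        simp only
        omega⟩) fun q q' hqq => ?_
    have h1 : ((q.1 : ℕ) ≠ q'.2) := fun h => Finset.disjoint_left.1 hTF q.1.2 (h ▸ q'.2.2)
    simp only [Subtype.mk.injEq, Prod.mk.injEq] at hqq
    have h2 : (q.1 : ℕ) = q'.1 ∧ (q.2 : ℕ) = q'.2 := by omega
    exact Prod.ext (Subtype.ext h2.1) (Subtype.ext h2.2)
  have hlt : ∀ q : T × F, min (q.1 : ℕ) q.2 + 1 < max (q.1 : ℕ) q.2 + 1 := fun q => by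
    have : (q.1 : ℕ) ≠ q.2 := fun h => Finset.disjoint_left.1 hTF q.1.2 (h ▸ q.2.2)
    omega
  have key := lintegral_indepFun_eq hind hX hU (f := S.indicator 1)
    (measurable_one.indicator hSm)
  have hpair := hX.prodMk hU
  rw [hevent, ← lintegral_indicator_one (hpair hSm)]
  refine key.trans (lintegral_congr fun ω => ?_)
  rw [← measure_forall_lt_uniform hV (fun q => M.U_meas _ _)
    (fun q => M.U_unif _ _ (by omega) (hlt q))
    (a := fun q => connProb M r (M.X (q.1 + 1) ω) (M.X (q.2 + 1) ω))
    (fun q => connProb_mem M hr _ _)]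
  have hsec : MeasurableSet {ω' | ((fun i : ℕ => M.X i ω), fun p : ℕ × ℕ => M.U p.1 p.2 ω') ∈ S} :=
    (measurable_const.prodMk hU) hSm
  exact lintegral_indicator_one hsec

lemma measure_iInter_avoid [IsProbabilityMeasure P] (M : Model d P) {r : ℝ}
    (hr : 0 < r) {T F : Finset ℕ} (hTF : Disjoint T F) :
    P (⋂ i ∈ T, avoid M r i F) = ∫⁻ ω, (∫⁻ z in cube d, ∏ i : T,
      ENNReal.ofReal (1 - connProb M r (M.X (i + 1) ω) z)) ^ F.card ∂P := by
  rw [measure_iInter_avoid_eq_lintegral_prod M hr hTF]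
  have hX : iIndepFun (fun i : ℕ => M.X (i + 1)) P :=
    M.X_indep.precomp (g := fun i : ℕ => ⟨i + 1, Nat.le_add_left 1 i⟩) fun i j h => by
      simpa using h
  have hXm : ∀ i, Measurable (M.X (i + 1)) := fun i => M.X_meas _
  have hind := hX.indepFun_finset T F hTF hXm
  set φ : (T → EuclideanSpace ℝ (Fin d)) × EuclideanSpace ℝ (Fin d) → ENNReal :=
    fun p => ∏ i : T, ENNReal.ofReal (1 - connProb M r (p.1 i) p.2) with hφ
  have hφm : Measurable φ := by
    refine Finset.measurable_prod _ fun i _ => (measurable_const.sub ?_).ennreal_ofReal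
    exact measurable_connProb_comp M hr (by fun_prop) measurable_snd
  have key := lintegral_indepFun_eq hind (measurable_pi_lambda _ fun i => hXm i)
    (measurable_pi_lambda _ fun i => hXm i)
    (f := fun p => ∏ j : F, φ (p.1, p.2 j)) (by
      refine Finset.measurable_prod _ fun j _ => hφm.comp (Measurable.prodMk measurable_fst ?_)
      fun_prop)
  have e : ∀ ω, ∏ q : T × F,
      ENNReal.ofReal (1 - connProb M r (M.X (q.1 + 1) ω) (M.X (q.2 + 1) ω)) =
      ∏ j : F, φ (fun i => M.X (i + 1) ω, M.X (j + 1) ω) := fun ω => by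
    rw [Fintype.prod_prod_type_right]
  simp_rw [e]
  refine key.trans (lintegral_congr fun ω => ?_)
  have hφω : Measurable fun z => φ (fun i => M.X (i + 1) ω, z) := hφm.comp measurable_prodMk_left
  have hcomp := (hX.precomp (g := fun j : F => (j : ℕ)) Subtype.val_injective).comp
    (fun _ z => φ (fun i => M.X (i + 1) ω, z)) fun _ => hφω
  have h2 := lintegral_prod_eq_prod_lintegral_of_indepFun Finset.univ _ hcomp
    fun j => hφω.comp (hXm j)
  refine h2.trans ?_
  have h3 : ∀ j : F, ∫⁻ ω', φ (fun i => M.X (i + 1) ω, M.X (j + 1) ω') ∂P =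
      ∫⁻ z in cube d, φ (fun i => M.X (i + 1) ω, z) := fun j => by
    rw [← M.X_unif (j + 1) (Nat.le_add_left 1 _), lintegral_map hφω (hXm j)]
  simp only [Function.comp_apply, h3]
  simp [hφ]

end Avoidance

section Moments

lemma measurable_one_sub_connProb (M : Model d P) {r : ℝ} (hr : 0 < r) :
    Measurable (Function.uncurry fun x y => 1 - connProb M r x y) :=
  measurable_const.sub (measurable_connProb M hr)

lemma one_sub_connProb_mem (M : Model d P) {r : ℝ} (hr : 0 < r)
    (x y : EuclideanSpace ℝ (Fin d)) : 1 - connProb M r x y ∈ Icc (0 : ℝ) 1 :=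
  ⟨by linarith [(connProb_mem M hr x y).2], by linarith [(connProb_mem M hr x y).1]⟩

lemma measureReal_avoid [IsProbabilityMeasure P] (M : Model d P) {r : ℝ} (hr : 0 < r) {i : ℕ}
    {F : Finset ℕ} (hi : i ∉ F) :
    P.real (avoid M r i F) =
      ∫ x in cube d, (∫ z in cube d, (1 - connProb M r x z)) ^ F.card := by
  have hprob := isProbabilityMeasure_restrict_cube M
  have h := measure_iInter_avoid M hr (T := {i}) (Finset.disjoint_singleton_left.2 hi)
  set Q : EuclideanSpace ℝ (Fin d) → ℝ := fun x => ∫ z in cube d, (1 - connProb M r x z) with hQ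
  have hmeas := measurable_one_sub_connProb M hr
  have hQm : Measurable Q := (hmeas.stronglyMeasurable.integral_prod_right).measurable
  have hQ0 : ∀ x, Q x ∈ Icc (0 : ℝ) 1 := fun x =>
    integral_mem_unitInterval (one_sub_connProb_mem M hr x)
  have inner : ∀ ω, (∫⁻ z in cube d, ∏ j : ({i} : Finset ℕ),
      ENNReal.ofReal (1 - connProb M r (M.X (j + 1) ω) z)) ^ F.card =
      ENNReal.ofReal (Q (M.X (i + 1) ω) ^ F.card) := fun ω => by
    rw [ENNReal.ofReal_pow (hQ0 _).1, ofReal_integral_eq_lintegral_ofReal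
      (integrable_of_mem_unitInterval (hmeas.of_uncurry_left) (one_sub_connProb_mem M hr _))
      (ae_of_all _ fun z => (one_sub_connProb_mem M hr _ z).1)]
    congr 1
    refine lintegral_congr fun z => ?_
    rw [Finset.prod_coe_sort {i} fun j => ENNReal.ofReal (1 - connProb M r (M.X (j + 1) ω) z),
      Finset.prod_singleton]
  simp only [inner, Finset.mem_singleton, iInter_iInter_eq_left] at h
  rw [measureReal_def, h, ← lintegral_map
    (f := fun x => ENNReal.ofReal (Q x ^ F.card)) (hQm.pow_const _).ennreal_ofReal
    (M.X_meas (i + 1)), M.X_unif _ (Nat.le_add_left 1 i),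
    ← integral_eq_lintegral_of_nonneg_ae (ae_of_all _ fun x => pow_nonneg (hQ0 x).1 _)
      (hQm.pow_const _).aestronglyMeasurable]

lemma measureReal_avoid_inter_avoid [IsProbabilityMeasure P] (M : Model d P) {r : ℝ} (hr : 0 < r)
    {i j : ℕ} {F : Finset ℕ} (hij : i ≠ j) (hi : i ∉ F) (hj : j ∉ F) :
    P.real (avoid M r i F ∩ avoid M r j F) =
      ∫ p : EuclideanSpace ℝ (Fin d) × EuclideanSpace ℝ (Fin d), (∫ z in cube d,
        (1 - connProb M r p.1 z) * (1 - connProb M r p.2 z)) ^ F.card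
        ∂((volume.restrict (cube d)).prod (volume.restrict (cube d))) := by
  have hprob := isProbabilityMeasure_restrict_cube M
  have h := measure_iInter_avoid M hr (T := {i, j}) (F := F) (by
    rw [Finset.disjoint_left]; intro k hk
    rcases Finset.mem_insert.1 hk with rfl | hk
    · exact hi
    · rwa [Finset.mem_singleton.1 hk])
  set Q : EuclideanSpace ℝ (Fin d) × EuclideanSpace ℝ (Fin d) → ℝ :=
    fun p => ∫ z in cube d, (1 - connProb M r p.1 z) * (1 - connProb M r p.2 z) with hQ
  have hmem : ∀ x y z, (1 - connProb M r x z) * (1 - connProb M r y z) ∈ Icc (0 : ℝ) 1 :=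
    fun x y z => ⟨mul_nonneg (one_sub_connProb_mem M hr _ _).1 (one_sub_connProb_mem M hr _ _).1,
      mul_le_one₀ (one_sub_connProb_mem M hr _ _).2 (one_sub_connProb_mem M hr _ _).1
        (one_sub_connProb_mem M hr _ _).2⟩
  have hmeas : Measurable fun p : (EuclideanSpace ℝ (Fin d) × EuclideanSpace ℝ (Fin d)) ×
      EuclideanSpace ℝ (Fin d) => (1 - connProb M r p.1.1 p.2) * (1 - connProb M r p.1.2 p.2) :=
    (measurable_const.sub (measurable_connProb_comp M hr (by fun_prop) (by fun_prop))).mul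
      (measurable_const.sub (measurable_connProb_comp M hr (by fun_prop) (by fun_prop)))
  have hQm : Measurable Q := (hmeas.stronglyMeasurable.integral_prod_right').measurable
  have hQ0 : ∀ p, Q p ∈ Icc (0 : ℝ) 1 := fun p => integral_mem_unitInterval (hmem _ _)
  have inner : ∀ ω, (∫⁻ z in cube d, ∏ k : ({i, j} : Finset ℕ),
      ENNReal.ofReal (1 - connProb M r (M.X (k + 1) ω) z)) ^ F.card =
      ENNReal.ofReal (Q (M.X (i + 1) ω, M.X (j + 1) ω) ^ F.card) := fun ω => by
    have hsection : Measurable fun z =>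
        (1 - connProb M r (M.X (i + 1) ω) z) * (1 - connProb M r (M.X (j + 1) ω) z) :=
      (measurable_one_sub_connProb M hr).of_uncurry_left.mul
        (measurable_one_sub_connProb M hr).of_uncurry_left
    rw [ENNReal.ofReal_pow (hQ0 _).1, ofReal_integral_eq_lintegral_ofReal
      (integrable_of_mem_unitInterval hsection (hmem _ _))
      (ae_of_all _ fun z => (hmem _ _ z).1)]
    congr 1
    refine lintegral_congr fun z => ?_
    rw [Finset.prod_coe_sort {i, j} fun j => ENNReal.ofReal (1 - connProb M r (M.X (j + 1) ω) z),
      Finset.prod_pair hij, ENNReal.ofReal_mul (one_sub_connProb_mem M hr _ _).1]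
  have hset : (⋂ k ∈ ({i, j} : Finset ℕ), avoid M r k F) = avoid M r i F ∩ avoid M r j F := by
    ext ω; simp
  have hind : IndepFun (M.X (i + 1)) (M.X (j + 1)) P :=
    M.X_indep.indepFun (i := ⟨i + 1, Nat.le_add_left 1 i⟩) (j := ⟨j + 1, Nat.le_add_left 1 j⟩)
      (by simpa using hij)
  have hlaw := (indepFun_iff_map_prod_eq_prod_map_map (M.X_meas (i + 1)).aemeasurable
    (M.X_meas (j + 1)).aemeasurable).1 hind
  rw [M.X_unif _ (Nat.le_add_left 1 i), M.X_unif _ (Nat.le_add_left 1 j)] at hlaw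
  simp only [inner, hset] at h
  rw [measureReal_def, h, ← lintegral_map
    (f := fun p => ENNReal.ofReal (Q p ^ F.card)) (hQm.pow_const _).ennreal_ofReal
    ((M.X_meas (i + 1)).prodMk (M.X_meas (j + 1))), hlaw,
    ← integral_eq_lintegral_of_nonneg_ae (ae_of_all _ fun x => pow_nonneg (hQ0 x).1 _)
      (hQm.pow_const _).aestronglyMeasurable]

lemma avoid_anti (M : Model d P) (r : ℝ) (i : ℕ) {F G : Finset ℕ} (h : F ⊆ G) :
    avoid M r i G ⊆ avoid M r i F :=
  fun _ hω j hj => hω j (h hj)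

/-- If every point has connection probability at least `b` to a uniform point, a vertex avoids a
set `F` of other vertices with probability at most `exp (-b |F|)`. -/
lemma measureReal_avoid_le_exp [IsProbabilityMeasure P] (M : Model d P) {r : ℝ} (hr : 0 < r)
    {i : ℕ} {F : Finset ℕ} (hi : i ∉ F) {b : ℝ}
    (hb : ∀ x ∈ cube d, b ≤ ∫ z in cube d, connProb M r x z) :
    P.real (avoid M r i F) ≤ Real.exp (-b * F.card) := by
  have hprob := isProbabilityMeasure_restrict_cube M
  rw [measureReal_avoid M hr hi]
  have h_int : Integrable (fun x => (∫ z in cube d, (1 - connProb M r x z)) ^ F.card)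
      (volume.restrict (cube d)) := by
    refine integrable_of_mem_unitInterval (Measurable.pow_const ?_ _) fun x => ?_
    · exact ((measurable_one_sub_connProb M hr).stronglyMeasurable.integral_prod_right).measurable
    · have := integral_mem_unitInterval (μ := volume.restrict (cube d))
        (one_sub_connProb_mem M hr x)
      exact ⟨pow_nonneg this.1 _, pow_le_one₀ this.1 this.2⟩
  calc ∫ x in cube d, (∫ z in cube d, (1 - connProb M r x z)) ^ F.card
      ≤ ∫ _x in cube d, Real.exp (-b * F.card) := by
        refine setIntegral_mono_on h_int (integrable_const _) measurableSet_cube fun x hx => ?_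
        rw [mul_comm, Real.exp_nat_mul]
        refine pow_le_pow_left₀ (integral_nonneg fun z => (one_sub_connProb_mem M hr x z).1) ?_ _
        rw [integral_sub (integrable_const _) (integrable_connProb M hr x)]
        have h1 := hb x hx
        have h2 := Real.add_one_le_exp (-b)
        simp only [integral_const, probReal_univ, smul_eq_mul, mul_one]
        linarith
    _ = Real.exp (-b * F.card) := by simp

/-- Among the first `K` vertices, the probability that none of the first `m` is isolated. -/
lemma measureReal_no_isolated_le [IsProbabilityMeasure P] (M : Model d P) {r : ℝ} (hr : 0 < r)
    {m K : ℕ} (hm : 0 < m) (hmK : m ≤ K) (hK : 2 ≤ K) (hθ : M.α * r ^ d ≤ 1 / 2) :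
    P.real (⋂ i ∈ Finset.range m, (avoid M r i ((Finset.range K).erase i))ᶜ) ≤
      (1 / m + 8 * (M.α * r ^ d) + 4 * K * (M.α * r ^ d) ^ 2) / (1 - M.α * r ^ d) ^ K := by
  have hprob := isProbabilityMeasure_restrict_cube M
  have hθ0 : 0 < M.α * r ^ d := mul_pos M.α_pos (by positivity)
  set θ := M.α * r ^ d with hθdef
  set μ : Measure (EuclideanSpace ℝ (Fin d)) := volume.restrict (cube d) with hμ
  set Q : EuclideanSpace ℝ (Fin d) → ℝ := fun x => ∫ z, (1 - connProb M r x z) ∂μ with hQ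
  have hQm : Measurable Q :=
    ((measurable_one_sub_connProb M hr).stronglyMeasurable.integral_prod_right).measurable
  have hQ01 : ∀ x, Q x ∈ Icc (0 : ℝ) 1 := fun x =>
    integral_mem_unitInterval (one_sub_connProb_mem M hr x)
  have hQlow : ∀ x, 1 - θ ≤ Q x := fun x => by
    simp only [hQ]
    rw [integral_sub (integrable_const _) (integrable_connProb M hr x)]
    have := integral_connProb_le M hr x
    simp only [integral_const, probReal_univ, smul_eq_mul, mul_one]
    linarith
  have iQ : ∀ n : ℕ, Integrable (fun x => Q x ^ n) μ := fun n =>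
    integrable_of_mem_unitInterval (hQm.pow_const n) fun x =>
      ⟨pow_nonneg (hQ01 x).1 n, pow_le_one₀ (hQ01 x).1 (hQ01 x).2⟩
  set p : ℝ := ∫ x, Q x ^ (K - 1) ∂μ with hp
  set q : ℝ := ∫ y : EuclideanSpace ℝ (Fin d) × EuclideanSpace ℝ (Fin d),
    (∫ z, (1 - connProb M r y.1 z) * (1 - connProb M r y.2 z) ∂μ) ^ (K - 2) ∂(μ.prod μ) with hq
  have hq0 : 0 ≤ q := integral_nonneg fun y => pow_nonneg (integral_nonneg fun z =>
    mul_nonneg (one_sub_connProb_mem M hr _ _).1 (one_sub_connProb_mem M hr _ _).1) _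
  have hple : (1 - θ) ^ K ≤ p := by
    have : ∫ _x, (1 - θ) ^ K ∂μ ≤ p := by
      refine integral_mono (integrable_const _) (iQ _) fun x => ?_
      calc (1 - θ) ^ K ≤ (1 - θ) ^ (K - 1) :=
            pow_le_pow_of_le_one (by linarith) (by linarith) (Nat.sub_le _ _)
        _ ≤ Q x ^ (K - 1) := pow_le_pow_left₀ (by linarith) (hQlow x) _
    simpa using this
  have hpow0 : 0 < (1 - θ) ^ K := pow_pos (by linarith) _
  have hp0 : 0 < p := hpow0.trans_le hple
  have hp1 : p ≤ 1 := by
    have : p ≤ ∫ _x, (1 : ℝ) ∂μ := integral_mono (iQ _) (integrable_const _) fun x =>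
      pow_le_one₀ (hQ01 x).1 (hQ01 x).2
    simpa using this
  have hB : ∫ x, Q x ^ (K - 2) ∂μ ≤ (1 + 2 * θ) * p := by
    rw [← integral_const_mul]
    refine integral_mono (iQ _) ((iQ _).const_mul _) fun x => ?_
    have e : Q x ^ (K - 1) = Q x ^ (K - 2) * Q x := by
      rw [← pow_succ]; congr 1; omega
    simp only [e]
    have h1 : 1 ≤ (1 + 2 * θ) * Q x := by nlinarith [hQlow x]
    nlinarith [pow_nonneg (hQ01 x).1 (K - 2)]
  have hB0 : 0 ≤ ∫ x, Q x ^ (K - 2) ∂μ := integral_nonneg fun x => pow_nonneg (hQ01 x).1 _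
  have hC : ∫ x, Q x ^ (K - 2 - 1) ∂μ ≤ 4 * p := by
    rw [← integral_const_mul]
    refine integral_mono (iQ _) ((iQ _).const_mul _) fun x => ?_
    have e : Q x ^ (K - 1) = Q x ^ (K - 2 - 1) * Q x ^ (K - 1 - (K - 2 - 1)) := by
      rw [← pow_add]; congr 1; omega
    have h2 : (1 / 4 : ℝ) ≤ Q x ^ (K - 1 - (K - 2 - 1)) :=
      calc (1 / 4 : ℝ) = (1 / 2) ^ 2 := by norm_num
        _ ≤ Q x ^ 2 := pow_le_pow_left₀ (by norm_num) (by linarith [hQlow x]) _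
        _ ≤ Q x ^ (K - 1 - (K - 2 - 1)) :=
            pow_le_pow_of_le_one (hQ01 x).1 (hQ01 x).2 (by omega)
    simp only [e]
    nlinarith [pow_nonneg (hQ01 x).1 (K - 2 - 1)]
  have hcorr : q ≤ (∫ x, Q x ^ (K - 2) ∂μ) ^ 2 +
      ((K - 2 : ℕ) : ℝ) * θ ^ 2 * ∫ x, Q x ^ (K - 2 - 1) ∂μ :=
    integral_joint_pow_le (measurable_connProb M hr) (connProb_mem M hr)
      (fun x => integral_connProb_le M hr x)
      (fun z => by simp_rw [connProb_comm M r _ z]; exact integral_connProb_le M hr z) (K - 2)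
  have hqp : q - p ^ 2 ≤ 8 * θ * p ^ 2 + 4 * K * θ ^ 2 * p := by
    have h1 : (∫ x, Q x ^ (K - 2) ∂μ) ^ 2 ≤ ((1 + 2 * θ) * p) ^ 2 := pow_le_pow_left₀ hB0 hB 2
    have h2 : ((K - 2 : ℕ) : ℝ) * θ ^ 2 * ∫ x, Q x ^ (K - 2 - 1) ∂μ ≤ K * θ ^ 2 * (4 * p) := by
      gcongr
      · exact integral_nonneg fun x => pow_nonneg (hQ01 x).1 _
      · exact Nat.sub_le _ _
    have h3 : ((1 + 2 * θ) * p) ^ 2 ≤ p ^ 2 + 8 * θ * p ^ 2 := by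
      nlinarith [mul_nonneg hθ0.le (sq_nonneg p)]
    linarith
  have hmain := measureReal_none_mul_sq_le (P := P) (s := Finset.range m)
    (A := fun i => avoid M r i ((Finset.range K).erase i))
    (fun i => measurableSet_avoid M hr i _) hq0 (p := p) (fun i hi => by
      rw [measureReal_avoid M hr (Finset.notMem_erase i _), Finset.card_erase_of_mem
        (Finset.mem_range.2 ((Finset.mem_range.1 hi).trans_le hmK)), Finset.card_range])
    (fun i hi j hj hij => by
      have hsub : avoid M r i ((Finset.range K).erase i) ∩ avoid M r j ((Finset.range K).erase j) ⊆
          avoid M r i (((Finset.range K).erase i).erase j) ∩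
            avoid M r j (((Finset.range K).erase i).erase j) :=
        inter_subset_inter (avoid_anti M r i (Finset.erase_subset _ _))
          (avoid_anti M r j (Finset.erase_subset_erase _ (Finset.erase_subset _ _)))
      refine (measureReal_mono hsub).trans (le_of_eq ?_)
      have hiK : i ∈ Finset.range K := Finset.mem_range.2 ((Finset.mem_range.1 hi).trans_le hmK)
      have hjK : j ∈ Finset.range K := Finset.mem_range.2 ((Finset.mem_range.1 hj).trans_le hmK)
      rw [measureReal_avoid_inter_avoid M hr hij (by simp) (by simp),
        Finset.card_erase_of_mem (Finset.mem_erase.2 ⟨hij.symm, hjK⟩),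
        Finset.card_erase_of_mem hiK, Finset.card_range, Nat.sub_sub])
  rw [Finset.card_range] at hmain
  set S := P.real (⋂ i ∈ Finset.range m, (avoid M r i ((Finset.range K).erase i))ᶜ) with hS
  have hm' : (0 : ℝ) < m := by exact_mod_cast hm
  have h5 : S * p ≤ 1 / m + 8 * θ + 4 * K * θ ^ 2 := by
    have h6 : S * (m * p) ^ 2 ≤ (m ^ 2 * p) * (1 / m + 8 * θ + 4 * K * θ ^ 2) := by
      have h7 : (m : ℝ) ^ 2 * (q - p ^ 2) ≤ m ^ 2 * (8 * θ * p ^ 2 + 4 * K * θ ^ 2 * p) := by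
        gcongr
      have h8 : 8 * θ * p ^ 2 ≤ 8 * θ * p := by nlinarith [mul_pos hθ0 hp0]
      have h9 : (m : ℝ) ^ 2 * (8 * θ * p ^ 2 + 4 * K * θ ^ 2 * p) ≤
          m ^ 2 * (8 * θ * p + 4 * K * θ ^ 2 * p) := by gcongr
      have h10 : (m ^ 2 * p) * (1 / m + 8 * θ + 4 * K * θ ^ 2) =
          m * p + m ^ 2 * (8 * θ * p + 4 * K * θ ^ 2 * p) := by
        field_simp
        ring
      linarith
    have h11 : S * (m * p) ^ 2 = (m ^ 2 * p) * (S * p) := by ring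
    rw [h11] at h6
    exact le_of_mul_le_mul_left h6 (by positivity)
  rw [le_div_iff₀ hpow0]
  exact (mul_le_mul_of_nonneg_left hple measureReal_nonneg).trans h5

end Moments

section Concentration

lemma ae_eventually_notMem_of_summable [IsProbabilityMeasure P] {A : ℕ → Set Ω} {b : ℕ → ℝ}
    (hb : Summable b) (h : ∀ᶠ n in atTop, P.real (A n) ≤ b n) :
    ∀ᵐ ω ∂P, ∀ᶠ n in atTop, ω ∉ A n := by
  refine ae_eventually_notMem ?_
  have hs : Summable fun n => P.real (A n) :=
    Summable.of_norm_bounded_eventually_nat hb (h.mono fun n hn => by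
      rwa [Real.norm_of_nonneg measureReal_nonneg])
  simpa [measureReal_def, ENNReal.ofReal_toReal (measure_ne_top P _)] using hs.tsum_ofReal_ne_top

lemma lintegral_exp_mul_N (M : Model d P) (n : ℕ) (s : ℝ) :
    ∫⁻ ω, ENNReal.ofReal (Real.exp (s * M.N n ω)) ∂P =
      ENNReal.ofReal (Real.exp (n * (Real.exp s - 1))) := by
  rw [← lintegral_map (f := fun k : ℕ => ENNReal.ofReal (Real.exp (s * k)))
    (measurable_of_countable _) (M.N_meas n), lintegral_countable']
  have hterm : ∀ k : ℕ, ENNReal.ofReal (Real.exp (s * k)) * (P.map (M.N n)) {k} =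
      ENNReal.ofReal (Real.exp (-(n : ℝ)) * ((n * Real.exp s) ^ k / k.factorial)) := fun k => by
    rw [Measure.map_apply (M.N_meas n) (measurableSet_singleton k)]
    have : M.N n ⁻¹' {k} = {ω | M.N n ω = k} := rfl
    rw [this, M.N_poisson, ← ENNReal.ofReal_mul (Real.exp_nonneg _), mul_comm s,
      Real.exp_nat_mul, mul_pow]
    congr 1
    ring
  have hsum : HasSum (fun k : ℕ => Real.exp (-(n : ℝ)) * ((n * Real.exp s) ^ k / k.factorial))
      (Real.exp (-(n : ℝ)) * Real.exp (n * Real.exp s)) := by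
    have := NormedSpace.expSeries_div_hasSum_exp (𝔸 := ℝ) ((n : ℝ) * Real.exp s)
    rw [← Real.exp_eq_exp_ℝ] at this
    exact this.mul_left _
  simp_rw [hterm]
  rw [← ENNReal.ofReal_tsum_of_nonneg (fun k => by positivity) hsum.summable, hsum.tsum_eq,
    ← Real.exp_add]
  congr 2
  ring

lemma measureReal_N_deviation_le [IsProbabilityMeasure P] (M : Model d P) (n : ℕ) {x : ℝ}
    (hx : 0 < x) :
    P.real {ω | Real.log x * (x * n) ≤ Real.log x * M.N n ω} ≤ Real.exp (n * -H x) := by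
  have hmeas : Measurable fun ω => ENNReal.ofReal (Real.exp (Real.log x * M.N n ω)) :=
    (measurable_of_countable fun k : ℕ => ENNReal.ofReal (Real.exp (Real.log x * k))).comp
      (M.N_meas n)
  have h := mul_meas_ge_le_lintegral (μ := P) hmeas
    (ENNReal.ofReal (Real.exp (Real.log x * (x * n))))
  rw [lintegral_exp_mul_N, Real.exp_log hx] at h
  simp only [ENNReal.ofReal_le_ofReal_iff (Real.exp_nonneg _), Real.exp_le_exp] at h
  have h' := ENNReal.toReal_mono ENNReal.ofReal_ne_top h
  rw [ENNReal.toReal_mul, ENNReal.toReal_ofReal (Real.exp_nonneg _),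
    ENNReal.toReal_ofReal (Real.exp_nonneg _), mul_comm, ← le_div_iff₀ (Real.exp_pos _),
    ← Real.exp_sub] at h'
  refine h'.trans (le_of_eq ?_)
  simp only [H]
  congr 1
  ring

lemma H_pos {x : ℝ} (hx : 0 < x) (hx1 : x ≠ 1) : 0 < H x := by
  have h := Real.log_lt_sub_one_of_pos (inv_pos.2 hx) (inv_ne_one.2 hx1)
  rw [Real.log_inv] at h
  have h2 := mul_lt_mul_of_pos_left h hx
  rw [mul_sub, mul_inv_cancel₀ hx.ne'] at h2
  simp only [H]
  linarith

lemma ae_eventually_N_deviation [IsProbabilityMeasure P] (M : Model d P) {x : ℝ}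
    (hx : 0 < x) (hx1 : x ≠ 1) :
    ∀ᵐ ω ∂P, ∀ᶠ n : ℕ in atTop, Real.log x * M.N n ω < Real.log x * (x * n) := by
  filter_upwards [ae_eventually_notMem_of_summable
    (Real.summable_exp_nat_mul_iff.2 (neg_neg_of_pos (H_pos hx hx1)))
    (Eventually.of_forall fun n => measureReal_N_deviation_le M n hx)] with ω hω
  exact hω.mono fun n hn => not_le.1 hn

lemma ae_eventually_N_mem_Ioo [IsProbabilityMeasure P] (M : Model d P) {ρ : ℝ} (hρ : 1 < ρ) :
    ∀ᵐ ω ∂P, ∀ᶠ n : ℕ in atTop, (M.N n ω : ℝ) ∈ Ioo (n / ρ) (ρ * n) := by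
  have hρ0 : 0 < ρ := one_pos.trans hρ
  filter_upwards [ae_eventually_N_deviation M hρ0 hρ.ne',
    ae_eventually_N_deviation M (inv_pos.2 hρ0) (inv_ne_one.2 hρ.ne')] with ω h1 h2
  filter_upwards [h1, h2] with n h1 h2
  have hlog := Real.log_pos hρ
  rw [Real.log_inv, neg_mul, neg_mul, neg_lt_neg_iff] at h2
  rw [div_eq_inv_mul]
  exact ⟨lt_of_mul_lt_mul_left h2 hlog.le, lt_of_mul_lt_mul_left h1 hlog.le⟩

end Concentration

section Deterministic

lemma deg_eq_zero_iff (M : Model d P) {n : ℕ} {r : ℝ} {ω : Ω} {i : ℕ} :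
    deg M n r ω i = 0 ↔ ∀ j, ¬ adj M n r ω i j := by
  have hfin : {j : ℕ | adj M n r ω i j}.Finite :=
    (finite_Iic (M.N n ω)).subset fun j hj => hj.2.2.2.2.1
  rw [deg, ncard_eq_zero hfin, eq_empty_iff_forall_notMem]
  rfl

lemma deg_eq_zero_iff_mem_avoid (M : Model d P) {n : ℕ} {r : ℝ} {ω : Ω} {i : ℕ}
    (hi : i < M.N n ω) :
    deg M n r ω (i + 1) = 0 ↔ ω ∈ avoid M r i ((Finset.range (M.N n ω)).erase i) := by
  rw [deg_eq_zero_iff]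
  constructor
  · intro h j hj
    have hj' := Finset.mem_erase.1 hj
    have hjN := Finset.mem_range.1 hj'.2
    by_contra hlt
    refine h (j + 1) ⟨by simpa using hj'.1.symm, by omega, by omega, by omega, by omega, ?_⟩
    rw [min_add_add_right, max_add_add_right]
    exact not_lt.1 hlt
  · rintro h j ⟨hij, -, hj1, -, hjN, hle⟩
    obtain ⟨k, rfl⟩ : ∃ k, j = k + 1 := ⟨j - 1, by omega⟩
    have hk := h k (Finset.mem_erase.2 ⟨by rintro rfl; exact hij rfl, Finset.mem_range.2 (by omega)⟩)
    rw [min_add_add_right, max_add_add_right] at hle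
    exact absurd hle (not_le.2 hk)

/-- There are no isolated vertices iff every vertex fails to avoid the others. -/
lemma isolatedCount_eq_zero_iff (M : Model d P) {n : ℕ} {r : ℝ} {ω : Ω} :
    isolatedCount M n r ω = 0 ↔
      ∀ i < M.N n ω, ω ∉ avoid M r i ((Finset.range (M.N n ω)).erase i) := by
  have hfin : {i : ℕ | 1 ≤ i ∧ i ≤ M.N n ω ∧ deg M n r ω i = 0}.Finite :=
    (finite_Iic (M.N n ω)).subset fun j hj => hj.2.1
  rw [isolatedCount, ncard_eq_zero hfin, eq_empty_iff_forall_notMem]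
  constructor
  · intro h i hi hav
    exact h (i + 1) ⟨by omega, by omega, (deg_eq_zero_iff_mem_avoid M hi).2 hav⟩
  · rintro h j ⟨hj1, hjN, hdeg⟩
    obtain ⟨k, rfl⟩ : ∃ k, j = k + 1 := ⟨j - 1, by omega⟩
    exact h k (by omega) ((deg_eq_zero_iff_mem_avoid M (by omega)).1 hdeg)

lemma avoid_subset_of_le (M : Model d P) {r s : ℝ} (hr : 0 < r) (hrs : r ≤ s) (i : ℕ)
    (F : Finset ℕ) : avoid M s i F ⊆ avoid M r i F :=
  fun _ hω j hj => (connProb_mono M hr hrs _ _).trans_lt (hω j hj)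

lemma critRadius_nonneg (M : Model d P) (n : ℕ) (ω : Ω) : 0 ≤ critRadius M n ω :=
  Real.sInf_nonneg fun _ hr => hr.1.le

lemma critRadius_le (M : Model d P) {n : ℕ} {ω : Ω} {r : ℝ} (hr : 0 < r)
    (h : isolatedCount M n r ω = 0) : critRadius M n ω ≤ r :=
  csInf_le ⟨0, fun _ hs => hs.1.le⟩ ⟨hr, h⟩

/-- A vertex among the first `m ≤ N_n` that avoids all of the first `K ≥ N_n` vertices is isolated
in `G_n(r)` for all `r ≤ R`, so the critical radius is at least `R`. -/
lemma le_critRadius (M : Model d P) {n m K : ℕ} {ω : Ω} {R : ℝ}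
    (hne : {r : ℝ | 0 < r ∧ isolatedCount M n r ω = 0}.Nonempty) (hm : m ≤ M.N n ω)
    (hK : M.N n ω ≤ K)
    (h : ω ∉ ⋂ i ∈ Finset.range m, (avoid M R i ((Finset.range K).erase i))ᶜ) :
    R ≤ critRadius M n ω := by
  refine le_csInf hne fun r hr => ?_
  by_contra hlt
  refine h (mem_iInter₂.2 fun i hi hav => ?_)
  refine isolatedCount_eq_zero_iff M |>.1 hr.2 i ((Finset.mem_range.1 hi).trans_le hm) ?_
  exact avoid_anti M r i (Finset.erase_subset_erase _ (Finset.range_subset_range.2 hK))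
    (avoid_subset_of_le M hr.1 (not_le.1 hlt).le i _ hav)

end Deterministic

section UpperBound

lemma exists_pos_pow_eq (hd : d ≠ 0) {x : ℝ} (hx : 0 < x) : ∃ r : ℝ, 0 < r ∧ r ^ d = x :=
  ⟨x ^ ((d : ℝ)⁻¹), Real.rpow_pos_of_pos hx _, Real.rpow_inv_natCast_pow hx.le hd⟩

/-- For a large constant `C` the graphs `G_n(r)` with `r ^ d = C log n / n` a.s. eventually have
no isolated vertices. -/
lemma exists_ae_eventually_isolatedCount_eq_zero [IsProbabilityMeasure P] (hd : d ≠ 0)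
    (M : Model d P) : ∃ C : ℝ, ∀ᵐ ω ∂P, ∀ᶠ n : ℕ in atTop,
      ∃ r : ℝ, 0 < r ∧ r ^ d = C * (Real.log n / n) ∧ isolatedCount M n r ω = 0 := by
  obtain ⟨η, hη, r₀, hr₀, hlow⟩ := exists_le_integral_connProb hd M
  refine ⟨12 / η, ?_⟩
  have hrad : ∀ n : ℕ, ∃ r : ℝ, 2 ≤ n → 0 < r ∧ r ^ d = 12 / η * (Real.log n / n) := fun n => by
    by_cases hn : 2 ≤ n
    · have h1 : (1 : ℝ) < n := by exact_mod_cast hn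
      have h2 := Real.log_pos h1
      obtain ⟨r, hr⟩ := exists_pos_pow_eq hd
        (show (0 : ℝ) < 12 / η * (Real.log n / n) by positivity)
      exact ⟨r, fun _ => hr⟩
    · exact ⟨0, fun h => absurd h hn⟩
  choose r hr using hrad
  have hsmall : ∀ᶠ n : ℕ in atTop, 12 / η * (Real.log n / n) ≤ r₀ ^ d := by
    have h0 : Tendsto (fun n : ℕ => Real.log n / n) atTop (nhds 0) :=
      (Real.isLittleO_log_id_atTop.tendsto_div_nhds_zero).comp tendsto_natCast_atTop_atTop
    have h1 := h0.const_mul (12 / η)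
    rw [mul_zero] at h1
    exact (h1.eventually_lt_const (pow_pos hr₀ d)).mono fun n hn => hn.le
  set A : ℕ → Set Ω := fun n => ⋃ i ∈ Finset.range (2 * n),
    avoid M (r n) i ((Finset.range ((n + 1) / 2)).erase i) with hA
  have hbound : ∀ᶠ n : ℕ in atTop, P.real (A n) ≤ 2 * (1 / (n : ℝ) ^ 2) := by
    filter_upwards [hsmall, eventually_ge_atTop 4] with n hn hn4
    obtain ⟨hrpos, hrpow⟩ := hr n (by omega)
    have hn0 : (0 : ℝ) < n := by positivity
    have hrle : r n ≤ r₀ := (pow_le_pow_iff_left₀ hrpos.le hr₀.le hd).1 (hrpow ▸ hn)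
    have hone : ∀ i ∈ Finset.range (2 * n),
        P.real (avoid M (r n) i ((Finset.range ((n + 1) / 2)).erase i)) ≤ 1 / (n : ℝ) ^ 3 := by
      intro i _
      refine (measureReal_avoid_le_exp M hrpos (Finset.notMem_erase _ _)
        (hlow (r n) hrpos hrle)).trans ?_
      have hcard : n ≤ 4 * ((Finset.range ((n + 1) / 2)).erase i).card := by
        have := Finset.pred_card_le_card_erase (s := Finset.range ((n + 1) / 2)) (a := i)
        rw [Finset.card_range] at this
        omega
      have hcard' : (n : ℝ) ≤ 4 * ((Finset.range ((n + 1) / 2)).erase i).card := by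
        exact_mod_cast hcard
      have hlog : 0 ≤ Real.log n := Real.log_natCast_nonneg n
      have e : (1 : ℝ) / (n : ℝ) ^ 3 = Real.exp (-(3 * Real.log n)) := by
        rw [Real.exp_neg, show (3 : ℝ) = (3 : ℕ) by norm_num, Real.exp_nat_mul,
          Real.exp_log hn0, one_div]
      rw [e, Real.exp_le_exp, neg_mul, neg_le_neg_iff, hrpow]
      calc 3 * Real.log n = 12 * (Real.log n / n) * (n / 4) := by field_simp; ring
        _ ≤ 12 * (Real.log n / n) * ((Finset.range ((n + 1) / 2)).erase i).card := by
            gcongr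
            linarith
        _ = _ := by field_simp
    calc P.real (A n) ≤ ∑ i ∈ Finset.range (2 * n),
          P.real (avoid M (r n) i ((Finset.range ((n + 1) / 2)).erase i)) :=
          measureReal_biUnion_finset_le _ _
      _ ≤ ∑ _i ∈ Finset.range (2 * n), 1 / (n : ℝ) ^ 3 := Finset.sum_le_sum hone
      _ = 2 * (1 / (n : ℝ) ^ 2) := by
          rw [Finset.sum_const, Finset.card_range, nsmul_eq_mul]
          push_cast
          field_simp
  filter_upwards [ae_eventually_notMem_of_summable
    ((Real.summable_one_div_nat_pow.2 one_lt_two).mul_left 2) hbound,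
    ae_eventually_N_mem_Ioo M one_lt_two] with ω h1 h2
  filter_upwards [h1, h2, eventually_ge_atTop 2] with n h1 h2 hn
  refine ⟨r n, (hr n hn).1, (hr n hn).2, (isolatedCount_eq_zero_iff M).2 fun i hi hav => h1 ?_⟩
  have hlt : M.N n ω < 2 * n := by exact_mod_cast h2.2
  have hgt : n < M.N n ω * 2 := by
    have := h2.1
    rw [div_lt_iff₀ two_pos] at this
    exact_mod_cast this
  exact mem_iUnion₂.2 ⟨i, Finset.mem_range.2 (hi.trans hlt), avoid_anti M _ i
    (Finset.erase_subset_erase _ (Finset.range_subset_range.2 (by omega))) hav⟩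

end UpperBound

section LowerBound

lemma exp_neg_mul_le_one_sub_pow {θ ρ : ℝ} (hρ : 1 < ρ) (hθ0 : 0 ≤ θ) (hθ : θ ≤ 1 - 1 / ρ)
    (K : ℕ) : Real.exp (-(K * (ρ * θ))) ≤ (1 - θ) ^ K := by
  have hρ0 : 0 < ρ := one_pos.trans hρ
  have h1 : 1 / ρ ≤ 1 - θ := by linarith
  have hpos : 0 < 1 - θ := (by positivity : 0 < 1 / ρ).trans_le h1
  have h2 : (1 - θ)⁻¹ ≤ ρ := by
    rw [inv_le_comm₀ hpos hρ0, ← one_div]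
    exact h1
  have h3 := Real.one_sub_inv_le_log_of_pos hpos
  have h4 : (1 - θ)⁻¹ - 1 = θ * (1 - θ)⁻¹ := by field_simp; ring
  have h5 : θ * (1 - θ)⁻¹ ≤ ρ * θ := by
    rw [mul_comm ρ]
    exact mul_le_mul_of_nonneg_left h2 hθ0
  rw [← mul_neg, Real.exp_nat_mul]
  refine pow_le_pow_left₀ (Real.exp_nonneg _) ?_ _
  rw [← Real.le_log_iff_exp_le hpos]
  linarith

/-- Along the scales `ρ ^ k`, the probability that none of the first `⌈ρ ^ k / ρ⌉` vertices is
isolated among the first `⌊ρ ^ 2 ρ ^ k⌋` decays geometrically up to a polynomial factor. -/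
lemma measureReal_no_isolated_scale_le [IsProbabilityMeasure P] (M : Model d P) {γ ρ R : ℝ}
    (hγ0 : 0 < γ) (hγ1 : γ < 1) (hρ : 1 < ρ) (k : ℕ) (hR : 0 < R)
    (hRd : M.α * R ^ d = γ * ((k + 1) * Real.log ρ) / ρ ^ k)
    (hhalf : M.α * R ^ d ≤ 1 / 2) (hθ : M.α * R ^ d ≤ 1 - 1 / ρ)
    (htwo : 2 ≤ ρ ^ k) (hgap : 1 ≤ (ρ ^ 2 - 1) * ρ ^ k) :
    P.real (⋂ i ∈ Finset.range ⌈ρ ^ k / ρ⌉₊,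
        (avoid M R i ((Finset.range ⌊ρ ^ 2 * ρ ^ k⌋₊).erase i))ᶜ) ≤
      (ρ + 8 * Real.log ρ + 4 * ρ ^ 2 * Real.log ρ ^ 2) * ρ *
        (((k + 1 : ℕ) : ℝ) ^ 2 * Real.exp (-((1 - ρ ^ 3 * γ) * Real.log ρ)) ^ (k + 1)) := by
  have hρ0 : 0 < ρ := one_pos.trans hρ
  have hL : 0 < Real.log ρ := Real.log_pos hρ
  set t : ℝ := ρ ^ k with ht
  have ht0 : 0 < t := by positivity
  set L := Real.log ρ with hLdef
  set θ := M.α * R ^ d with hθdef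
  have hθ0 : 0 < θ := mul_pos M.α_pos (pow_pos hR d)
  have hm : 0 < ⌈t / ρ⌉₊ := Nat.ceil_pos.2 (by positivity)
  have hmK : ⌈t / ρ⌉₊ ≤ ⌊ρ ^ 2 * t⌋₊ := by
    refine Nat.le_floor ?_
    have h1 := Nat.ceil_lt_add_one (show 0 ≤ t / ρ by positivity)
    have h2 : t / ρ ≤ t := div_le_self ht0.le hρ.le
    linarith
  have hK : 2 ≤ ⌊ρ ^ 2 * t⌋₊ := Nat.le_floor (by push_cast; linarith)
  have hKle : (⌊ρ ^ 2 * t⌋₊ : ℝ) ≤ ρ ^ 2 * t := Nat.floor_le (by positivity)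
  refine (measureReal_no_isolated_le M hR hm hmK hK hhalf).trans ?_
  have hk1 : (1 : ℝ) ≤ k + 1 := by linarith [k.cast_nonneg (α := ℝ)]
  have hθle : θ ≤ (k + 1) * L / t := by
    rw [hRd]
    exact div_le_div_of_nonneg_right (mul_le_of_le_one_left (by positivity) hγ1.le) ht0.le
  have hnum : 1 / (⌈t / ρ⌉₊ : ℝ) + 8 * θ + 4 * ⌊ρ ^ 2 * t⌋₊ * θ ^ 2 ≤
      (ρ + 8 * L + 4 * ρ ^ 2 * L ^ 2) * (k + 1) ^ 2 / t := by
    have h1 : 1 / (⌈t / ρ⌉₊ : ℝ) ≤ ρ / t := by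
      rw [← one_div_div t ρ]
      exact one_div_le_one_div_of_le (show 0 < t / ρ by positivity) (Nat.le_ceil _)
    have h2 : 4 * (⌊ρ ^ 2 * t⌋₊ : ℝ) * θ ^ 2 ≤ 4 * (ρ ^ 2 * t) * ((k + 1) * L / t) ^ 2 := by
      gcongr
    have h3 : 4 * (ρ ^ 2 * t) * ((k + 1) * L / t) ^ 2 = 4 * ρ ^ 2 * L ^ 2 * (k + 1) ^ 2 / t := by
      field_simp
    have h4 : (k + 1 : ℝ) ≤ (k + 1) ^ 2 := by nlinarith
    calc _ ≤ ρ / t + 8 * ((k + 1) * L / t) + 4 * ρ ^ 2 * L ^ 2 * (k + 1) ^ 2 / t := by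
          linarith
      _ = (ρ * 1 + 8 * L * (k + 1) + 4 * ρ ^ 2 * L ^ 2 * (k + 1) ^ 2) / t := by ring
      _ ≤ (ρ * (k + 1) ^ 2 + 8 * L * (k + 1) ^ 2 + 4 * ρ ^ 2 * L ^ 2 * (k + 1) ^ 2) / t := by
          gcongr
          exact one_le_pow₀ hk1
      _ = _ := by ring
  have hden : Real.exp (-(ρ ^ 3 * γ * ((k + 1) * L))) ≤ (1 - θ) ^ ⌊ρ ^ 2 * t⌋₊ := by
    refine le_trans ?_ (exp_neg_mul_le_one_sub_pow hρ hθ0.le hθ _)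
    rw [Real.exp_le_exp, neg_le_neg_iff]
    calc (⌊ρ ^ 2 * t⌋₊ : ℝ) * (ρ * θ) ≤ ρ ^ 2 * t * (ρ * θ) := by gcongr
      _ = ρ ^ 3 * γ * ((k + 1) * L) := by rw [hRd]; field_simp
  refine (div_le_div₀ (by positivity) hnum (Real.exp_pos _) hden).trans (le_of_eq ?_)
  have htexp : t⁻¹ = Real.exp (-(k * L)) := by
    rw [Real.exp_neg, Real.exp_nat_mul, hLdef, Real.exp_log hρ0]
  have hexp : t⁻¹ * Real.exp (ρ ^ 3 * γ * ((k + 1) * L)) =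
      ρ * Real.exp (-((1 - ρ ^ 3 * γ) * L)) ^ (k + 1) := by
    have hρL : ∀ x, ρ * Real.exp x = Real.exp (L + x) := fun x => by
      rw [Real.exp_add, hLdef, Real.exp_log hρ0]
    rw [htexp, ← Real.exp_nat_mul, hρL, ← Real.exp_add]
    congr 1
    push_cast
    ring
  rw [Real.exp_neg, div_inv_eq_mul, div_eq_mul_inv, mul_assoc _ t⁻¹, hexp]
  push_cast
  ring

lemma summable_mul_succ_sq_mul_pow {q : ℝ} (hq : ‖q‖ < 1) (C : ℝ) :
    Summable fun k : ℕ => C * (((k + 1 : ℕ) : ℝ) ^ 2 * q ^ (k + 1)) := by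
  have h := summable_pow_mul_geometric_of_norm_lt_one 2 hq
  exact ((summable_nat_add_iff (f := fun k : ℕ => (k : ℝ) ^ 2 * q ^ k) 1).2 h).mul_left C

/-- Along the scales `ρ ^ k`, at radii `R k` with `α (R k) ^ d = γ log (ρ ^ (k + 1)) / ρ ^ k`, a.s.
eventually some early vertex is isolated. -/
lemma exists_radii_ae_eventually_isolated [IsProbabilityMeasure P] (hd : d ≠ 0) (M : Model d P)
    {γ ρ : ℝ} (hγ0 : 0 < γ) (hγ1 : γ < 1) (hρ : 1 < ρ) (hβ : ρ ^ 3 * γ < 1) :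
    ∃ R : ℕ → ℝ, (∀ k, 0 < R k) ∧
      (∀ k : ℕ, M.α * R k ^ d = γ * ((k + 1) * Real.log ρ) / ρ ^ k) ∧
      ∀ᵐ ω ∂P, ∀ᶠ k in atTop, ω ∉ ⋂ i ∈ Finset.range ⌈ρ ^ k / ρ⌉₊,
        (avoid M (R k) i ((Finset.range ⌊ρ ^ 2 * ρ ^ k⌋₊).erase i))ᶜ := by
  have hρ0 : 0 < ρ := one_pos.trans hρ
  have hL : 0 < Real.log ρ := Real.log_pos hρ
  have hrad : ∀ k : ℕ, ∃ R : ℝ, 0 < R ∧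
      M.α * R ^ d = γ * ((k + 1) * Real.log ρ) / ρ ^ k := fun k => by
    have hα := M.α_pos
    obtain ⟨R, hR, hRd⟩ := exists_pos_pow_eq hd
      (show 0 < γ * ((k + 1) * Real.log ρ) / ρ ^ k / M.α by positivity)
    exact ⟨R, hR, by rw [hRd]; field_simp⟩
  choose R hR hRd using hrad
  have hθ : Tendsto (fun k => M.α * R k ^ d) atTop (nhds 0) := by
    have h1 : Tendsto (fun k : ℕ => (k : ℝ) ^ 1 / ρ ^ k) atTop (nhds 0) :=
      tendsto_pow_const_div_const_pow_of_one_lt 1 hρ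
    have h2 := (h1.comp (tendsto_add_atTop_nat 1)).const_mul (γ * Real.log ρ * ρ)
    rw [mul_zero] at h2
    refine h2.congr fun k => ?_
    rw [hRd]
    simp only [Function.comp_apply, pow_succ, pow_zero, one_mul]
    push_cast
    field_simp
  have hpow : Tendsto (fun k : ℕ => ρ ^ k) atTop atTop := tendsto_pow_atTop_atTop_of_one_lt hρ
  have hsq : 0 < ρ ^ 2 - 1 := by nlinarith
  have hinv : 0 < 1 - 1 / ρ := by rw [sub_pos, div_lt_one hρ0]; exact hρ
  have hq : ‖Real.exp (-((1 - ρ ^ 3 * γ) * Real.log ρ))‖ < 1 := by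
    rw [Real.norm_of_nonneg (Real.exp_nonneg _), Real.exp_lt_one_iff, neg_lt_zero]
    exact mul_pos (by linarith) hL
  refine ⟨R, hR, hRd, ae_eventually_notMem_of_summable (summable_mul_succ_sq_mul_pow hq
    ((ρ + 8 * Real.log ρ + 4 * ρ ^ 2 * Real.log ρ ^ 2) * ρ)) ?_⟩
  filter_upwards [hθ.eventually_lt_const one_half_pos, hθ.eventually_lt_const hinv,
    hpow.eventually_ge_atTop 2, (hpow.const_mul_atTop hsq).eventually_ge_atTop 1]
    with k h1 h2 h3 h4
  exact measureReal_no_isolated_scale_le M hγ0 hγ1 hρ k (hR k) (hRd k) h1.le h2.le h3 h4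

lemma ae_eventually_le_of_lt_one [IsProbabilityMeasure P] (hd : d ≠ 0) (M : Model d P) {γ : ℝ}
    (hγ0 : 0 < γ) (hγ1 : γ < 1) : ∀ᵐ ω ∂P, ∀ᶠ n : ℕ in atTop,
      γ ≤ M.α * n * critRadius M n ω ^ d / Real.log n := by
  obtain ⟨ρ, hβ, hρ⟩ : ∃ ρ : ℝ, ρ ^ 3 * γ < 1 ∧ 1 < ρ := by
    have hcont : Tendsto (fun ρ : ℝ => ρ ^ 3 * γ) (nhdsWithin 1 (Ioi 1)) (nhds (1 ^ 3 * γ)) :=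
      (((continuous_pow 3).mul continuous_const).tendsto 1).mono_left nhdsWithin_le_nhds
    exact ((hcont.eventually_lt_const (by simpa using hγ1)).and self_mem_nhdsWithin).exists
  have hρ0 : 0 < ρ := one_pos.trans hρ
  obtain ⟨R, hR, hRd, hBC⟩ := exists_radii_ae_eventually_isolated hd M hγ0 hγ1 hρ hβ
  obtain ⟨C, hC⟩ := exists_ae_eventually_isolatedCount_eq_zero hd M
  filter_upwards [hBC, hC, ae_eventually_N_mem_Ioo M hρ] with ω h1 h2 h3
  obtain ⟨k₀, hk₀⟩ := eventually_atTop.1 h1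
  filter_upwards [h2, h3, eventually_ge_atTop 2,
    tendsto_natCast_atTop_atTop.eventually_ge_atTop (ρ ^ k₀)] with n h2 h3 hn hnk
  have hn1 : (1 : ℝ) < n := by exact_mod_cast hn
  have hn0 : (0 : ℝ) < n := one_pos.trans hn1
  obtain ⟨k, hk, hk'⟩ := exists_nat_pow_near hn1.le hρ
  have hkk₀ : k₀ ≤ k := Nat.lt_succ_iff.1 ((pow_lt_pow_iff_right₀ hρ).1 (hnk.trans_lt hk'))
  obtain ⟨s, hs, -, hs0⟩ := h2
  have hRle : R k ≤ critRadius M n ω := by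
    refine le_critRadius M ⟨s, hs, hs0⟩ (Nat.ceil_le.2 ?_) (Nat.le_floor ?_) (hk₀ k hkk₀)
    · exact (div_le_div_of_nonneg_right hk hρ0.le).trans h3.1.le
    · calc (M.N n ω : ℝ) ≤ ρ * n := h3.2.le
        _ ≤ ρ * ρ ^ (k + 1) := by gcongr
        _ = ρ ^ 2 * ρ ^ k := by ring
  have hlog : 0 < Real.log n := Real.log_pos hn1
  have hlogle : Real.log n ≤ (k + 1) * Real.log ρ := by
    have := Real.log_le_log hn0 hk'.le
    rwa [Real.log_pow, Nat.cast_succ] at this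
  rw [le_div_iff₀ hlog]
  calc γ * Real.log n ≤ γ * ((k + 1) * Real.log ρ) := by gcongr
    _ = ρ ^ k * (M.α * R k ^ d) := by rw [hRd]; field_simp
    _ ≤ n * (M.α * critRadius M n ω ^ d) := by
        have := M.α_pos
        have := hR k
        gcongr
    _ = M.α * n * critRadius M n ω ^ d := by ring

end LowerBound

/-- Theorem 1(iii): a.s. `liminf α n d_n^d / log n ≥ (c-3d)/(c-d)`. -/
theorem critRadius_liminf_ge (hd : 2 ≤ d) [IsProbabilityMeasure P] (M : Model d P)
    {c : ℝ} (hc : (3 : ℝ) * d < c)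
    (hg : M.g =o[atTop] fun r : ℝ => r ^ (-c)) :
    ∀ᵐ ω ∂P, (c - 3 * d) / (c - d) ≤ Filter.liminf
      (fun n : ℕ => M.α * n * critRadius M n ω ^ d / Real.log n) atTop := by
  have hd0 : d ≠ 0 := by omega
  have hdpos : (0 : ℝ) < d := by positivity
  have hγ0 : 0 < (c - 3 * d) / (c - d) := div_pos (by linarith) (by linarith)
  have hγ1 : (c - 3 * d) / (c - d) < 1 := by
    rw [div_lt_one (by linarith)]
    linarith
  obtain ⟨C, hC⟩ := exists_ae_eventually_isolatedCount_eq_zero hd0 M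
  filter_upwards [ae_eventually_le_of_lt_one hd0 M hγ0 hγ1, hC] with ω h1 h2
  refine le_liminf_of_le (isCoboundedUnder_ge_of_eventually_le atTop (x := M.α * C) ?_) h1
  filter_upwards [h2, eventually_ge_atTop 2] with n ⟨r, hr, hrd, hr0⟩ hn
  have hn1 : (1 : ℝ) < n := by exact_mod_cast hn
  rw [div_le_iff₀ (Real.log_pos hn1)]
  calc M.α * n * critRadius M n ω ^ d ≤ M.α * n * r ^ d := by
        have := M.α_pos
        have := critRadius_nonneg M n ω
        gcongr
        exact critRadius_le M hr hr0
    _ = M.α * C * Real.log n := by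
        rw [hrd]
        field_simp

end RCM
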